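/- arXiv:2106.10647 — 3 statements merged into one kernel-verified Lean document; each statement's English description precedes it below -/
import Mathlib

section
/- Let I ⊆ ℝ be a closed bounded interval and f : I → I a continuous map admitting no 2-cycle. Then f is universal for the first Sharkovsky class if and only if there exists a point p ∈ I with f(p) = p such that for every ε > 0 there exist points x₁, x₂ ∈ (p, p + ε) ∩ I and x₃, x₄ ∈ (p − ε, p) ∩ I with f(x₁) > p, f(x₂) < p, f(x₃) > p, and f(x₄) < p (that is, arbitrarily near p, on both sides of p, the values of f swing both above p and below p). -/
/-- `f`, viewed as an interval map on `[a,b]`, is universal for the first Sharkovsky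
class: every orbit pattern of any interval map with no 2-cycle occurs as an orbit
pattern of `f`. -/
def IsUniversalF1 (a b : ℝ) (f : ℝ → ℝ) : Prop :=
  ∀ c d : ℝ, c ≤ d → ∀ g : ℝ → ℝ,
    ContinuousOn g (Set.Icc c d) →
    Set.MapsTo g (Set.Icc c d) (Set.Icc c d) →
    (¬ ∃ x ∈ Set.Icc c d, ∃ y ∈ Set.Icc c d, x ≠ y ∧ g x = y ∧ g y = x) →
    ∀ p ∈ Set.Icc c d, ∃ q ∈ Set.Icc a b,
      ∀ m n : ℕ, (g^[m] p < g^[n] p ↔ f^[m] q < f^[n] q)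

open Set Filter Topology

/-- Coppel, two steps. -/
theorem coppel_two (a b : ℝ) (f : ℝ → ℝ) (hf : ContinuousOn f (Icc a b))
    (hm : MapsTo f (Icc a b) (Icc a b))
    (h2 : ¬ ∃ x ∈ Icc a b, ∃ y ∈ Icc a b, x ≠ y ∧ f x = y ∧ f y = x)
    (x : ℝ) (hx : x ∈ Icc a b) (h : x < f x) : x < f (f x) := by
  by_contra hc
  push Not at hc
  have hne : f (f x) ≠ x := fun he =>
    h2 ⟨x, hx, f x, hm hx, h.ne, rfl, he⟩
  have hlt : f (f x) < x := lt_of_le_of_ne hc hne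
  have hff : ContinuousOn (fun t => f (f t)) (Icc a b) := hf.comp hf hm
  have hsub : Icc a x ⊆ Icc a b := Icc_subset_Icc le_rfl hx.2
  have hS : IsCompact {t ∈ Icc a x | t ≤ f (f t)} := by
    have hcl : IsClosed {t ∈ Icc a x | t ≤ f (f t)} :=
      isClosed_Icc.isClosed_le continuousOn_id (hff.mono hsub)
    exact isCompact_Icc.of_isClosed_subset hcl (fun t ht => ht.1)
  have ha : a ∈ Icc a b := ⟨le_rfl, hx.1.trans hx.2⟩
  obtain ⟨w, hw, hmax⟩ := hS.exists_isGreatest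
    ⟨a, ⟨le_rfl, hx.1⟩, (hm (hm ha)).1⟩
  have hwx : w < x := by
    refine lt_of_le_of_ne hw.1.2 ?_
    rintro rfl
    exact absurd hw.2 (not_le.mpr hlt)
  have hwI : w ∈ Icc a b := hsub hw.1
  have hmax' : ∀ t, w < t → t ≤ x → f (f t) < t := by
    intro t h1 h3
    by_contra hcon
    push Not at hcon
    exact absurd (hmax ⟨⟨hw.1.1.trans h1.le, h3⟩, hcon⟩) (not_le.mpr h1)
  have hsub2 : Icc w x ⊆ Icc a b := Icc_subset_Icc hw.1.1 hx.2
  have hw2 : f (f w) = w := by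
    by_contra hcon
    have h3 : w < f (f w) := lt_of_le_of_ne hw.2 (Ne.symm hcon)
    have hc2 : ContinuousOn (fun t => f (f t) - t) (Icc w x) :=
      (hff.mono hsub2).sub continuousOn_id
    obtain ⟨t, ht, ht0⟩ := intermediate_value_Icc' hwx.le hc2
      (show (0:ℝ) ∈ Icc _ _ from ⟨by linarith, by linarith⟩)
    simp only at ht0
    rcases eq_or_lt_of_le ht.1 with h5 | h5
    · subst h5; linarith
    · have := hmax' t h5 ht.2
      linarith
  have hw1 : f w = w := by
    by_contra hcon
    exact h2 ⟨w, hwI, f w, hm hwI, Ne.symm hcon, rfl, hw2⟩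
  obtain ⟨t, ht, htx⟩ := intermediate_value_Icc hwx.le (hf.mono hsub2)
      (show x ∈ Icc _ _ from ⟨by rw [hw1]; exact hwx.le, h.le⟩)
  have hwt : w < t := by
    refine lt_of_le_of_ne ht.1 ?_
    rintro rfl
    linarith
  have := hmax' t hwt ht.2
  rw [htx] at this
  linarith [ht.2]

theorem iter_mem {a b : ℝ} {f : ℝ → ℝ} (hm : MapsTo f (Icc a b) (Icc a b))
    {x : ℝ} (hx : x ∈ Icc a b) (n : ℕ) : f^[n] x ∈ Icc a b := hm.iterate n hx

/-- Coppel's lemma. -/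
theorem coppel_up (a b : ℝ) (f : ℝ → ℝ) (hf : ContinuousOn f (Icc a b))
    (hm : MapsTo f (Icc a b) (Icc a b))
    (h2 : ¬ ∃ x ∈ Icc a b, ∃ y ∈ Icc a b, x ≠ y ∧ f x = y ∧ f y = x)
    (x : ℝ) (hx : x ∈ Icc a b) (h : x < f x) (n : ℕ) : x < f^[n+1] x := by
  induction n using Nat.strong_induction_on with
  | _ n ih =>
  rcases n with _ | n
  · simpa using h
  by_contra hc
  push Not at hc
  set d := f^[n+1] x with hd
  have hdx : x < d := ih n (by omega)
  have hfd : f d ≤ x := by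
    rw [Function.iterate_succ_apply'] at hc
    exact hc
  have hdI : d ∈ Icc a b := iter_mem hm hx _
  have hsub : Icc x d ⊆ Icc a b := Icc_subset_Icc hx.1 hdI.2
  have hS : IsCompact {t ∈ Icc x d | t ≤ f t} := by
    have hcl : IsClosed {t ∈ Icc x d | t ≤ f t} :=
      isClosed_Icc.isClosed_le continuousOn_id (hf.mono hsub)
    exact isCompact_Icc.of_isClosed_subset hcl (fun t ht => ht.1)
  obtain ⟨z, hz, hmax⟩ := hS.exists_isGreatest ⟨x, ⟨le_rfl, hdx.le⟩, h.le⟩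
  have hzd : z < d := by
    refine lt_of_le_of_ne hz.1.2 ?_
    intro he
    have := hz.2
    rw [he] at this
    linarith
  have hmax' : ∀ t, z < t → t ≤ d → f t < t := by
    intro t h1 h3
    by_contra hcon
    push Not at hcon
    exact absurd (hmax ⟨⟨hz.1.1.trans h1.le, h3⟩, hcon⟩) (not_le.mpr h1)
  have hfz : f z = z := by
    by_contra hcon
    have h3 : z < f z := lt_of_le_of_ne hz.2 (Ne.symm hcon)
    have hc2 : ContinuousOn (fun t => f t - t) (Icc z d) :=
      (hf.mono (Icc_subset_Icc (hx.1.trans hz.1.1) hdI.2)).sub continuousOn_id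
    obtain ⟨t, ht, ht0⟩ := intermediate_value_Icc' hzd.le hc2
      (show (0:ℝ) ∈ Icc _ _ from ⟨by linarith, by linarith⟩)
    simp only at ht0
    rcases eq_or_lt_of_le ht.1 with h5 | h5
    · subst h5; linarith
    · have := hmax' t h5 ht.2
      linarith
  have key : ∀ j, j < n + 2 → x ≤ f^[j] x ∧ f^[j] x < d := by
    intro j
    induction j with
    | zero => intro _; exact ⟨le_rfl, hdx⟩
    | succ j ihj =>
      intro hj
      obtain ⟨i1, i2⟩ := ihj (by omega)
      refine ⟨(ih j (by omega)).le, ?_⟩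
      rw [Function.iterate_succ_apply']
      set y := f^[j] x
      by_contra hcon
      push Not at hcon
      rcases le_or_gt y z with hyz | hyz
      · have hs : Icc y z ⊆ Icc a b :=
          Icc_subset_Icc (hx.1.trans i1) (hzd.le.trans hdI.2)
        obtain ⟨u, hu, hud⟩ := intermediate_value_Icc' hyz (hf.mono hs)
          (show d ∈ Icc _ _ from ⟨by rw [hfz]; exact hzd.le, hcon⟩)
        have := coppel_two a b f hf hm h2 u (hs hu) (by rw [hud]; linarith [hu.2])
        rw [hud] at this
        linarith [hu.1]
      · have := hmax' y hyz i2.le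
        linarith
  exact lt_irrefl _ (key (n+1) (by omega)).2

theorem coppel_down (a b : ℝ) (f : ℝ → ℝ) (hf : ContinuousOn f (Icc a b))
    (hm : MapsTo f (Icc a b) (Icc a b))
    (h2 : ¬ ∃ x ∈ Icc a b, ∃ y ∈ Icc a b, x ≠ y ∧ f x = y ∧ f y = x)
    (x : ℝ) (hx : x ∈ Icc a b) (h : f x < x) (n : ℕ) : f^[n+1] x < x := by
  have hmn : ∀ t, t ∈ Icc (-b) (-a) → -t ∈ Icc a b := fun t ht =>
    ⟨by linarith [ht.2], by linarith [ht.1]⟩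
  have hiter : ∀ k, (fun t => - f (-t))^[k] (-x) = - f^[k] x := by
    intro k
    induction k with
    | zero => rfl
    | succ k ih => simp only [Function.iterate_succ_apply', ih, neg_neg]
  have := coppel_up (-b) (-a) (fun t => - f (-t))
    ((hf.comp continuousOn_neg hmn).neg)
    (fun t ht => ⟨neg_le_neg (hm (hmn t ht)).2, neg_le_neg (hm (hmn t ht)).1⟩)
    (by
      rintro ⟨s, hs, t, ht, hne, e1, e2⟩
      exact h2 ⟨-s, hmn s hs, -t, hmn t ht, fun e => hne (neg_injective e),
        by linarith, by linarith⟩)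
    (-x) ⟨by linarith [hx.2], by linarith [hx.1]⟩ (by simp only [neg_neg]; linarith) n
  rw [hiter] at this
  linarith

/-- Following a sequence of compact sets, each covered by the image of the previous one. -/
theorem follow (a b : ℝ) (f : ℝ → ℝ) (hf : ContinuousOn f (Icc a b))
    (hm : MapsTo f (Icc a b) (Icc a b)) (C : ℕ → Set ℝ)
    (hC : ∀ n, IsClosed (C n)) (hsub : ∀ n, C n ⊆ Icc a b) (hne : ∀ n, (C n).Nonempty)
    (hcov : ∀ n, C (n+1) ⊆ f '' C n) : ∃ q ∈ Icc a b, ∀ n, f^[n] q ∈ C n := by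
  have hlift : ∀ n, ∀ z ∈ C n, ∃ q ∈ Icc a b, f^[n] q = z ∧ ∀ i ≤ n, f^[i] q ∈ C i := by
    intro n
    induction n with
    | zero =>
      intro z hz
      refine ⟨z, hsub 0 hz, rfl, fun i hi => ?_⟩
      obtain rfl : i = 0 := by omega
      exact hz
    | succ n ih =>
      intro z hz
      obtain ⟨w, hw, hwz⟩ := hcov n hz
      obtain ⟨q, hq, e, h⟩ := ih w hw
      have e' : f^[n+1] q = z := by rw [Function.iterate_succ_apply', e, hwz]
      refine ⟨q, hq, e', fun i hi => ?_⟩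
      rcases Nat.lt_or_ge i (n+1) with h1 | h1
      · exact h i (by omega)
      · obtain rfl : i = n + 1 := by omega
        rw [e']; exact hz
  have hcont : ∀ n, ContinuousOn (f^[n]) (Icc a b) := fun n => hf.iterate hm n
  have hpre : ∀ n, IsClosed (Icc a b ∩ f^[n] ⁻¹' C n) := fun n =>
    (hcont n).preimage_isClosed_of_isClosed isClosed_Icc (hC n)
  let K : ℕ → Set ℝ := fun n => ⋂ i ≤ n, (Icc a b ∩ f^[i] ⁻¹' C i)
  have hK : ∀ n, IsClosed (K n) := fun n =>
    isClosed_biInter fun i _ => hpre i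
  obtain ⟨q, hq⟩ := IsCompact.nonempty_iInter_of_sequence_nonempty_isCompact_isClosed K
    (fun n => by
      intro q hq
      simp only [K, mem_iInter] at hq ⊢
      exact fun i hi => hq i (by omega))
    (fun n => by
      obtain ⟨z, hz⟩ := hne n
      obtain ⟨q, hq, _, h⟩ := hlift n z hz
      refine ⟨q, ?_⟩
      simp only [K, mem_iInter]
      exact fun i hi => ⟨hq, h i hi⟩)
    (isCompact_Icc.of_isClosed_subset (hK 0) (fun q hq => by
      simp only [K, mem_iInter] at hq
      exact (hq 0 le_rfl).1))
    hK
  simp only [K, mem_iInter] at hq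
  exact ⟨q, (hq 0 0 le_rfl).1, fun n => (hq n n le_rfl).2⟩

theorem box (f : ℝ → ℝ) (u v c d : ℝ) (hf : ContinuousOn f (uIcc u v))
    (hu : f u ≤ c) (hv : d ≤ f v) :
    IsClosed (uIcc u v ∩ f ⁻¹' Icc c d) ∧ Icc c d ⊆ f '' (uIcc u v ∩ f ⁻¹' Icc c d) := by
  refine ⟨hf.preimage_isClosed_of_isClosed isClosed_Icc isClosed_Icc, fun y hy => ?_⟩
  obtain ⟨x, hx, e⟩ := intermediate_value_uIcc hf
    (Icc_subset_uIcc (show y ∈ Icc (f u) (f v) from ⟨hu.trans hy.1, hy.2.trans hv⟩))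
  exact ⟨x, ⟨hx, by rw [mem_preimage, e]; exact hy⟩, e⟩

theorem boxes (a b : ℝ) (f : ℝ → ℝ) (hf : ContinuousOn f (Icc a b)) (p : ℝ)
    (h : ∀ ε > (0 : ℝ),
        (∃ x₁ ∈ Set.Ioo p (p + ε) ∩ Set.Icc a b, p < f x₁) ∧
        (∃ x₂ ∈ Set.Ioo p (p + ε) ∩ Set.Icc a b, f x₂ < p) ∧
        (∃ x₃ ∈ Set.Ioo (p - ε) p ∩ Set.Icc a b, p < f x₃) ∧
        (∃ x₄ ∈ Set.Ioo (p - ε) p ∩ Set.Icc a b, f x₄ < p)) (δ : ℝ) (hδ : 0 < δ) :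
    ∃ η : ℝ, ∃ L R : Set ℝ, 0 < η ∧ η ≤ δ ∧ IsClosed L ∧ IsClosed R ∧
      L ⊆ Icc a b ∧ R ⊆ Icc a b ∧ (∀ x ∈ L, p - δ < x ∧ x < p - η) ∧
      (∀ x ∈ R, p + η < x ∧ x < p + δ) ∧
      Icc (p - η) (p + η) ⊆ f '' L ∧ Icc (p - η) (p + η) ⊆ f '' R := by
  obtain ⟨⟨x₁, ⟨⟨h1a, h1b⟩, h1I⟩, h1⟩, ⟨x₂, ⟨⟨h2a, h2b⟩, h2I⟩, h2⟩, ⟨x₃, ⟨⟨h3a, h3b⟩, h3I⟩, h3⟩,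
    ⟨x₄, ⟨⟨h4a, h4b⟩, h4I⟩, h4⟩⟩ := h δ hδ
  obtain ⟨η, hη, hlt⟩ : ∃ η : ℝ, 0 < η ∧ (η < δ ∧ η < f x₁ - p ∧ η < p - f x₂ ∧ η < f x₃ - p ∧
      η < p - f x₄ ∧ η < x₁ - p ∧ η < x₂ - p ∧ η < p - x₃ ∧ η < p - x₄) := by
    have hh : 0 < min δ (min (f x₁ - p) (min (p - f x₂) (min (f x₃ - p) (min (p - f x₄)
      (min (x₁ - p) (min (x₂ - p) (min (p - x₃) (p - x₄)))))))) := by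
      simp only [lt_min_iff]
      refine ⟨?_, ?_, ?_, ?_, ?_, ?_, ?_, ?_, ?_⟩ <;> linarith
    obtain ⟨η, h0, h1⟩ := exists_between hh
    simp only [lt_min_iff] at h1
    exact ⟨η, h0, h1⟩
  obtain ⟨l0, l1, l2, l3, l4, l5, l6, l7, l8⟩ := hlt
  have s1 : uIcc x₄ x₃ ⊆ Icc a b := ordConnected_Icc.uIcc_subset h4I h3I
  have s2 : uIcc x₂ x₁ ⊆ Icc a b := ordConnected_Icc.uIcc_subset h2I h1I
  obtain ⟨c1, d1⟩ := box f x₄ x₃ (p - η) (p + η) (hf.mono s1) (by linarith) (by linarith)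
  obtain ⟨c2, d2⟩ := box f x₂ x₁ (p - η) (p + η) (hf.mono s2) (by linarith) (by linarith)
  have t1 : uIcc x₄ x₃ ⊆ Ioo (p - δ) (p - η) :=
    ordConnected_Ioo.uIcc_subset ⟨h4a, by linarith⟩ ⟨h3a, by linarith⟩
  have t2 : uIcc x₂ x₁ ⊆ Ioo (p + η) (p + δ) :=
    ordConnected_Ioo.uIcc_subset ⟨by linarith, h2b⟩ ⟨by linarith, h1b⟩
  exact ⟨η, _, _, hη, l0.le, c1, c2, fun x hx => s1 hx.1, fun x hx => s2 hx.1,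
    fun x hx => t1 hx.1, fun x hx => t2 hx.1, d1, d2⟩

theorem universal_of_swing (a b : ℝ) (f : ℝ → ℝ)
    (hf : ContinuousOn f (Set.Icc a b))
    (hmaps : Set.MapsTo f (Set.Icc a b) (Set.Icc a b)) (p : ℝ) (hp : p ∈ Icc a b) (hfp : f p = p)
    (h : ∀ ε > (0 : ℝ),
        (∃ x₁ ∈ Set.Ioo p (p + ε) ∩ Set.Icc a b, p < f x₁) ∧
        (∃ x₂ ∈ Set.Ioo p (p + ε) ∩ Set.Icc a b, f x₂ < p) ∧
        (∃ x₃ ∈ Set.Ioo (p - ε) p ∩ Set.Icc a b, p < f x₃) ∧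
        (∃ x₄ ∈ Set.Ioo (p - ε) p ∩ Set.Icc a b, f x₄ < p)) : IsUniversalF1 a b f := by
  intro c d hcd g hg hgm hg2 r hr
  choose E L R hE hEle hLc hRc hLI hRI hL hR hLcov hRcov using boxes a b f hf p h
  let D : ℕ → {x : ℝ // 0 < x} :=
    fun n => Nat.rec ⟨1, one_pos⟩ (fun _ x => ⟨E x.1 x.2, hE x.1 x.2⟩) n
  have hD : ∀ n, (D (n+1)).1 = E (D n).1 (D n).2 := fun n => rfl
  have hanti : Antitone (fun n => (D n).1) :=
    antitone_nat_of_succ_le fun n => by rw [hD]; exact hEle _ _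
  set y : ℕ → ℝ := fun n => g^[n] r with hy
  have hyI : ∀ n, y n ∈ Icc c d := fun n => iter_mem hgm hr n
  have hys : ∀ n, y (n+1) = g (y n) := fun n => Function.iterate_succ_apply' g n r
  have hyadd : ∀ m k, y (m + k) = g^[k] (y m) := fun m k => by
    simp only [hy]; rw [add_comm, Function.iterate_add_apply]
  have yup : ∀ m n, m < n → y m < y (m+1) → y m < y n := by
    intro m n hmn hlt
    obtain ⟨k, rfl⟩ : ∃ k, n = m + (k+1) := ⟨n - m - 1, by omega⟩
    rw [hyadd]
    exact coppel_up c d g hg hgm hg2 _ (hyI m) (by rw [← hys]; exact hlt) k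
  have ydown : ∀ m n, m < n → y (m+1) < y m → y n < y m := by
    intro m n hmn hlt
    obtain ⟨k, rfl⟩ : ∃ k, n = m + (k+1) := ⟨n - m - 1, by omega⟩
    rw [hyadd]
    exact coppel_down c d g hg hgm hg2 _ (hyI m) (by rw [← hys]; exact hlt) k
  have yeq : ∀ m n, m < n → y m = y (m+1) → y n = y m := by
    intro m n hmn he
    obtain ⟨k, rfl⟩ : ∃ k, n = m + k := ⟨n - m, by omega⟩
    rw [hyadd]
    exact Function.iterate_fixed (by rw [← hys]; exact he.symm) k
  let C : ℕ → Set ℝ := fun n => if y n < y (n+1) then L (D n).1 (D n).2 else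
    if y (n+1) < y n then R (D n).1 (D n).2 else {p}
  have Cup : ∀ n, y n < y (n+1) → C n = L (D n).1 (D n).2 := fun n h => if_pos h
  have Cdown : ∀ n, y (n+1) < y n → C n = R (D n).1 (D n).2 := fun n h => by
    simp only [C]; rw [if_neg h.le.not_gt, if_pos h]
  have Ceq : ∀ n, y n = y (n+1) → C n = {p} := fun n h => by
    simp only [C]; rw [if_neg h.not_lt, if_neg h.symm.not_lt]
  have Csub : ∀ n, C n ⊆ Icc (p - (D n).1) (p + (D n).1) := by
    intro n x hx
    have h0 := (D n).2
    rcases lt_trichotomy (y n) (y (n+1)) with h | h | h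
    · rw [Cup n h] at hx
      have := hL _ _ x hx
      exact ⟨by linarith, by linarith [hE _ (D n).2]⟩
    · rw [Ceq n h] at hx
      obtain rfl : x = p := hx
      exact ⟨by linarith, by linarith⟩
    · rw [Cdown n h] at hx
      have := hR _ _ x hx
      exact ⟨by linarith [hE _ (D n).2], by linarith⟩
  have pmem : ∀ n, p ∈ Icc (p - E (D n).1 (D n).2) (p + E (D n).1 (D n).2) := fun n =>
    ⟨by linarith [hE _ (D n).2], by linarith [hE _ (D n).2]⟩
  obtain ⟨q, hq, hqC⟩ := follow a b f hf hmaps C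
    (fun n => by
      simp only [C]; split_ifs
      · exact hLc _ _
      · exact hRc _ _
      · exact isClosed_singleton)
    (fun n => by
      simp only [C]; split_ifs
      · exact hLI _ _
      · exact hRI _ _
      · exact singleton_subset_iff.mpr hp)
    (fun n => by
      simp only [C]; split_ifs
      · exact Set.Nonempty.of_image ⟨p, hLcov _ _ (pmem n)⟩
      · exact Set.Nonempty.of_image ⟨p, hRcov _ _ (pmem n)⟩
      · exact singleton_nonempty p)
    (fun n => by
      rcases lt_trichotomy (y n) (y (n+1)) with h | h | h
      · rw [Cup n h]
        exact (Csub (n+1)).trans (hLcov _ _)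
      · have h' : y (n+1) = y (n+2) := by
          rw [yeq n (n+2) (by omega) h, h]
        rw [Ceq n h, Ceq _ h', image_singleton, hfp]
      · rw [Cdown n h]
        exact (Csub (n+1)).trans (hRcov _ _))
  have near : ∀ m n, m < n → f^[n] q ∈ Icc (p - E (D m).1 (D m).2) (p + E (D m).1 (D m).2) := by
    intro m n hmn
    have h1 := Csub n (hqC n)
    have h2 : (D n).1 ≤ (D (m+1)).1 := hanti (show m + 1 ≤ n from hmn)
    rw [hD] at h2
    exact ⟨by linarith [h1.1], by linarith [h1.2]⟩
  have zup : ∀ m n, m < n → y m < y (m+1) → f^[m] q < f^[n] q := by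
    intro m n hmn hlt
    have h1 := hqC m
    rw [Cup m hlt] at h1
    linarith [(hL _ _ _ h1).2, (near m n hmn).1]
  have zdown : ∀ m n, m < n → y (m+1) < y m → f^[n] q < f^[m] q := by
    intro m n hmn hlt
    have h1 := hqC m
    rw [Cdown m hlt] at h1
    linarith [(hR _ _ _ h1).1, (near m n hmn).2]
  have zeq : ∀ m n, m < n → y m = y (m+1) → f^[n] q = f^[m] q := by
    intro m n hmn he
    have h1 := hqC m
    rw [Ceq m he] at h1
    have h1' : f^[m] q = p := h1
    obtain ⟨k, rfl⟩ : ∃ k, n = k + m := ⟨n - m, by omega⟩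
    rw [Function.iterate_add_apply, h1']
    exact Function.iterate_fixed hfp k
  refine ⟨q, hq, fun m n => ?_⟩
  change y m < y n ↔ _
  rcases lt_trichotomy m n with hmn | rfl | hmn
  · rcases lt_trichotomy (y m) (y (m+1)) with h | h | h
    · exact ⟨fun _ => zup m n hmn h, fun _ => yup m n hmn h⟩
    · simp [zeq m n hmn h, yeq m n hmn h]
    · exact ⟨fun h' => absurd (ydown m n hmn h) h'.le.not_gt,
        fun h' => absurd (zdown m n hmn h) h'.le.not_gt⟩
  · simp
  · rcases lt_trichotomy (y n) (y (n+1)) with h | h | h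
    · exact ⟨fun h' => absurd (yup n m hmn h) h'.le.not_gt,
        fun h' => absurd (zup n m hmn h) h'.le.not_gt⟩
    · simp [zeq n m hmn h, yeq n m hmn h]
    · exact ⟨fun _ => zdown n m hmn h, fun _ => ydown n m hmn h⟩

/-- There is a map without 2-cycle having an orbit that goes up, up, down, down, periodically. -/
theorem exists_pattern : ∃ g : ℝ → ℝ, Continuous g ∧ MapsTo g (Icc (-1) 1) (Icc (-1) 1) ∧
    (¬ ∃ x ∈ Icc (-1:ℝ) 1, ∃ y ∈ Icc (-1:ℝ) 1, x ≠ y ∧ g x = y ∧ g y = x) ∧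
    ∃ c : ℝ, 0 < c ∧ c < 1 ∧ ∀ k : ℕ, g^[4*k] (-1) = -c^(4*k) ∧ g^[4*k+1] (-1) = -c^(4*k+1) ∧
      g^[4*k+2] (-1) = c^(4*k+2) ∧ g^[4*k+3] (-1) = c^(4*k+3) := by
  set c : ℝ := Real.exp (-(Real.pi/2)) with hc
  have c0 : 0 < c := Real.exp_pos _
  have c1 : 2 * c < 1 := by
    have h1 : 2 < Real.exp (Real.pi/2) := by
      have := Real.add_one_le_exp (Real.pi/2)
      linarith [Real.pi_gt_three]
    have h2 : c * Real.exp (Real.pi/2) = 1 := by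
      rw [hc, ← Real.exp_add]; simp
    nlinarith
  have hlog : ∀ n : ℕ, Real.log (c^n) = -(n * (Real.pi/2)) := by
    intro n; rw [Real.log_pow, hc, Real.log_exp]; ring
  set φ : ℝ → ℝ := fun x => Real.sin (-Real.log x) - Real.cos (-Real.log x) with hφ
  have hφ2 : ∀ x, |φ x| ≤ 2 := by
    intro x
    rw [abs_le]
    have h1 := Real.sin_le_one (-Real.log x)
    have h2 := Real.neg_one_le_sin (-Real.log x)
    have h3 := Real.cos_le_one (-Real.log x)
    have h4 := Real.neg_one_le_cos (-Real.log x)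
    constructor <;> simp only [hφ] <;> linarith
  set g : ℝ → ℝ := fun x => c * |x| * φ x with hg
  have hgle : ∀ x, |g x| ≤ 2 * c * |x| := by
    intro x
    simp only [hg]
    rw [abs_mul, abs_mul, abs_abs, abs_of_pos c0]
    have := mul_le_mul_of_nonneg_left (hφ2 x) (mul_nonneg c0.le (abs_nonneg x))
    linarith
  have hglt : ∀ x, x ≠ 0 → |g x| < |x| := by
    intro x hx
    have := hgle x
    have h2 := abs_pos.mpr hx
    nlinarith
  have hg0 : g 0 = 0 := by simp [hg]
  have hval : ∀ (x : ℝ) (n : ℕ), |x| = c^n →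
      g x = c^(n+1) * (Real.sin (n * (Real.pi/2)) - Real.cos (n*(Real.pi/2))) := by
    intro x n hx
    simp only [hg, hφ]
    rw [← Real.log_abs, hx, hlog, neg_neg]; ring
  have e0 : ∀ (x : ℝ) (k : ℕ), |x| = c^(4*k) → g x = -c^(4*k+1) := by
    intro x k hx
    rw [hval x _ hx]
    have : ((4 * k : ℕ) : ℝ) * (Real.pi/2) = (k:ℝ) * (2 * Real.pi) := by push_cast; ring
    rw [this]
    simp [Real.cos_nat_mul_two_pi, (by simpa using Real.sin_add_nat_mul_two_pi 0 k :
      Real.sin ((k:ℝ) * (2 * Real.pi)) = 0)]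
  have e1 : ∀ (x : ℝ) (k : ℕ), |x| = c^(4*k+1) → g x = c^(4*k+2) := by
    intro x k hx
    rw [hval x _ hx]
    have : ((4 * k + 1 : ℕ) : ℝ) * (Real.pi/2) = Real.pi/2 + (k:ℝ) * (2 * Real.pi) := by
      push_cast; ring
    rw [this, Real.sin_add_nat_mul_two_pi, Real.cos_add_nat_mul_two_pi]
    simp
  have e2 : ∀ (x : ℝ) (k : ℕ), |x| = c^(4*k+2) → g x = c^(4*k+3) := by
    intro x k hx
    rw [hval x _ hx]
    have : ((4 * k + 2 : ℕ) : ℝ) * (Real.pi/2) = Real.pi + (k:ℝ) * (2 * Real.pi) := by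
      push_cast; ring
    rw [this, Real.sin_add_nat_mul_two_pi, Real.cos_add_nat_mul_two_pi]
    simp
  have e3 : ∀ (x : ℝ) (k : ℕ), |x| = c^(4*k+3) → g x = -c^(4*k+4) := by
    intro x k hx
    rw [hval x _ hx]
    have : ((4 * k + 3 : ℕ) : ℝ) * (Real.pi/2) = Real.pi/2 + Real.pi + (k:ℝ) * (2 * Real.pi) := by
      push_cast; ring
    rw [this, Real.sin_add_nat_mul_two_pi, Real.cos_add_nat_mul_two_pi, Real.sin_add_pi,
      Real.cos_add_pi]
    simp
  have habs : ∀ n : ℕ, |c^n| = c^n := fun n => abs_of_pos (pow_pos c0 n)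
  refine ⟨g, ?_, ?_, ?_, c, c0, by linarith, ?_⟩
  · rw [continuous_iff_continuousAt]
    intro x
    by_cases hx : x = 0
    · subst hx
      unfold ContinuousAt
      rw [hg0]
      apply squeeze_zero_norm (a := fun x => 2 * c * |x|) (fun x => hgle x)
      have : Continuous fun x : ℝ => 2 * c * |x| := by fun_prop
      simpa using this.tendsto 0
    · simp only [hg, hφ]
      fun_prop (disch := assumption)
  · intro x hx
    rw [mem_Icc, ← abs_le] at hx ⊢
    have := hgle x
    nlinarith [abs_nonneg x]
  · rintro ⟨x, _, y, _, hne, h1, h2⟩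
    by_cases hx : x = 0
    · subst hx; rw [hg0] at h1; exact hne h1
    by_cases hy : y = 0
    · subst hy; rw [hg0] at h2; exact hne h2.symm
    have a1 := hglt x hx
    have a2 := hglt y hy
    rw [h1] at a1
    rw [h2] at a2
    linarith
  · have step : ∀ k : ℕ, g^[4*k] (-1) = -c^(4*k) → g^[4*k+1] (-1) = -c^(4*k+1) ∧
      g^[4*k+2] (-1) = c^(4*k+2) ∧ g^[4*k+3] (-1) = c^(4*k+3) ∧
      g^[4*k+4] (-1) = -c^(4*k+4) := by
      intro k h0
      have h1 : g^[4*k+1] (-1) = -c^(4*k+1) := by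
        rw [Function.iterate_succ_apply', h0, e0 _ k (by rw [abs_neg, habs])]
      have h2 : g^[4*k+2] (-1) = c^(4*k+2) := by
        rw [Function.iterate_succ_apply', h1, e1 _ k (by rw [abs_neg, habs])]
      have h3 : g^[4*k+3] (-1) = c^(4*k+3) := by
        rw [Function.iterate_succ_apply', h2, e2 _ k (by rw [habs])]
      have h4 : g^[4*k+4] (-1) = -c^(4*k+4) := by
        rw [Function.iterate_succ_apply', h3, e3 _ k (by rw [habs])]
      exact ⟨h1, h2, h3, h4⟩
    have all : ∀ k : ℕ, g^[4*k] (-1) = -c^(4*k) := by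
      intro k
      induction k with
      | zero => simp
      | succ k ih => exact (step k ih).2.2.2
    intro k
    obtain ⟨s1, s2, s3, _⟩ := step k (all k)
    exact ⟨all k, s1, s2, s3⟩

theorem swing_of_universal (a b : ℝ) (f : ℝ → ℝ)
    (hf : ContinuousOn f (Set.Icc a b))
    (hmaps : Set.MapsTo f (Set.Icc a b) (Set.Icc a b)) (hU : IsUniversalF1 a b f) :
    ∃ p ∈ Set.Icc a b, f p = p ∧
      ∀ ε > (0 : ℝ),
        (∃ x₁ ∈ Set.Ioo p (p + ε) ∩ Set.Icc a b, p < f x₁) ∧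
        (∃ x₂ ∈ Set.Ioo p (p + ε) ∩ Set.Icc a b, f x₂ < p) ∧
        (∃ x₃ ∈ Set.Ioo (p - ε) p ∩ Set.Icc a b, p < f x₃) ∧
        (∃ x₄ ∈ Set.Ioo (p - ε) p ∩ Set.Icc a b, f x₄ < p) := by
  obtain ⟨g, gc, gm, g2, c, c0, c1, hg⟩ := exists_pattern
  obtain ⟨q, hq, hord⟩ := hU (-1) 1 (by norm_num) g gc.continuousOn gm g2 (-1)
    ⟨le_rfl, by norm_num⟩
  set x : ℕ → ℝ := fun n => f^[n] q with hx
  have hxI : ∀ n, x n ∈ Icc a b := fun n => iter_mem hmaps hq n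
  have hxs : ∀ n, f (x n) = x (n+1) := fun n => (Function.iterate_succ_apply' f n q).symm
  have hpos : ∀ n : ℕ, 0 < c^n := fun n => pow_pos c0 n
  have hdec : ∀ n : ℕ, c^(n+1) < c^n := fun n => pow_lt_pow_right_of_lt_one₀ c0 c1 (by omega)
  have o01 : ∀ k, x (4*k) < x (4*k+1) := fun k => (hord _ _).1 (by
    rw [(hg k).1, (hg k).2.1]; linarith [hdec (4*k)])
  have o14 : ∀ k, x (4*k+1) < x (4*(k+1)) := fun k => (hord _ _).1 (by
    rw [(hg (k+1)).1, (hg k).2.1]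
    have h1 := hdec (4*k+1)
    have h2 := hdec (4*k+2)
    have h3 := hdec (4*k+3)
    have e : 4*(k+1) = 4*k+3+1 := by ring
    rw [e]; linarith)
  have o32 : ∀ k, x (4*k+3) < x (4*k+2) := fun k => (hord _ _).1 (by
    rw [(hg k).2.2.1, (hg k).2.2.2]; linarith [hdec (4*k+2)])
  have o63 : ∀ k, x (4*(k+1)+2) < x (4*k+3) := fun k => (hord _ _).1 (by
    rw [(hg (k+1)).2.2.1, (hg k).2.2.2]
    have h1 := hdec (4*k+3)
    have h2 := hdec (4*k+4)
    have h3 := hdec (4*k+5)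
    have e : 4*(k+1)+2 = 4*k+5+1 := by ring
    rw [e]; linarith)
  have olr : ∀ k l, x (4*k) < x (4*l+2) := fun k l => (hord _ _).1 (by
    rw [(hg k).1, (hg l).2.2.1]; linarith [hpos (4*k), hpos (4*l+2)])
  have mono : StrictMono (fun k => x (4*k)) :=
    strictMono_nat_of_lt_succ fun k => (o01 k).trans (o14 k)
  have anti : StrictAnti (fun k => x (4*k+2)) :=
    strictAnti_nat_of_succ_lt fun k => (o63 k).trans (o32 k)
  obtain ⟨p, hp⟩ : ∃ p, Tendsto (fun k => x (4*k)) atTop (𝓝 p) :=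
    ⟨_, tendsto_atTop_ciSup mono.monotone ⟨b, by rintro _ ⟨k, rfl⟩; exact (hxI _).2⟩⟩
  obtain ⟨r, hr⟩ : ∃ r, Tendsto (fun k => x (4*k+2)) atTop (𝓝 r) :=
    ⟨_, tendsto_atTop_ciInf anti.antitone ⟨a, by rintro _ ⟨k, rfl⟩; exact (hxI _).1⟩⟩
  have hp1 : Tendsto (fun k => x (4*k+1)) atTop (𝓝 p) :=
    tendsto_of_tendsto_of_tendsto_of_le_of_le hp (hp.comp (tendsto_add_atTop_nat 1))
      (fun k => (o01 k).le) (fun k => (o14 k).le)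
  have hr1 : Tendsto (fun k => x (4*k+3)) atTop (𝓝 r) :=
    tendsto_of_tendsto_of_tendsto_of_le_of_le (hr.comp (tendsto_add_atTop_nat 1)) hr
      (fun k => (o63 k).le) (fun k => (o32 k).le)
  have hpI : p ∈ Icc a b := isClosed_Icc.mem_of_tendsto hp (Eventually.of_forall fun k => hxI _)
  have lim : ∀ (u : ℕ → ℕ), Tendsto (fun k => x (u k)) atTop (𝓝 p) →
      Tendsto (fun k => x (u k + 1)) atTop (𝓝 (f p)) := by
    intro u hu
    have h1 : Tendsto (fun k => x (u k)) atTop (𝓝[Icc a b] p) :=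
      tendsto_nhdsWithin_iff.2 ⟨hu, Eventually.of_forall fun k => hxI _⟩
    have h2 := (hf p hpI).tendsto.comp h1
    refine h2.congr fun k => ?_
    exact hxs _
  have hfp : f p = p := tendsto_nhds_unique (lim _ hp) hp1
  have hpr : r = p := by
    rw [← hfp]; exact tendsto_nhds_unique hr (lim _ hp1)
  rw [hpr] at hr hr1
  have l0 : ∀ k, x (4*k) < p := fun k =>
    (mono (Nat.lt_succ_self k)).trans_le (mono.monotone.ge_of_tendsto hp _)
  have l1 : ∀ k, x (4*k+1) < p := fun k => (o14 k).trans (l0 _)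
  have l2 : ∀ k, p < x (4*k+2) := fun k =>
    (anti.antitone.le_of_tendsto hr (k+1)).trans_lt (anti (Nat.lt_succ_self k))
  have l3 : ∀ k, p < x (4*k+3) := fun k => (l2 _).trans (o63 k)
  refine ⟨p, hpI, hfp, fun ε hε => ?_⟩
  obtain ⟨k, ⟨m0, m1⟩, m2, m3⟩ := (((hp.eventually_const_lt (show p - ε < p by linarith)).and
    (hp1.eventually_const_lt (show p - ε < p by linarith))).and
    ((hr.eventually_lt_const (show p < p + ε by linarith)).and
    (hr1.eventually_lt_const (show p < p + ε by linarith)))).exists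
  refine ⟨⟨x (4*k+2), ⟨⟨l2 k, m2⟩, hxI _⟩, ?_⟩, ⟨x (4*k+3), ⟨⟨l3 k, m3⟩, hxI _⟩, ?_⟩,
    ⟨x (4*k+1), ⟨⟨m1, l1 k⟩, hxI _⟩, ?_⟩, ⟨x (4*k), ⟨⟨m0, l0 k⟩, hxI _⟩, ?_⟩⟩
  · rw [hxs]; exact l3 k
  · rw [hxs]; exact l0 (k+1)
  · rw [hxs]; exact l2 k
  · rw [hxs]; exact l1 k

/-- Characterization of universal maps in the first Sharkovsky class: arbitrarily
near some fixed point p, on both sides of p, the values of f swing both above and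
below p. -/
theorem stmt_17 (a b : ℝ) (hab : a ≤ b) (f : ℝ → ℝ)
    (hf : ContinuousOn f (Set.Icc a b))
    (hmaps : Set.MapsTo f (Set.Icc a b) (Set.Icc a b))
    (hno2 : ¬ ∃ x ∈ Set.Icc a b, ∃ y ∈ Set.Icc a b, x ≠ y ∧ f x = y ∧ f y = x) :
    IsUniversalF1 a b f ↔
    ∃ p ∈ Set.Icc a b, f p = p ∧
      ∀ ε > (0 : ℝ),
        (∃ x₁ ∈ Set.Ioo p (p + ε) ∩ Set.Icc a b, p < f x₁) ∧
        (∃ x₂ ∈ Set.Ioo p (p + ε) ∩ Set.Icc a b, f x₂ < p) ∧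
        (∃ x₃ ∈ Set.Ioo (p - ε) p ∩ Set.Icc a b, p < f x₃) ∧
        (∃ x₄ ∈ Set.Ioo (p - ε) p ∩ Set.Icc a b, f x₄ < p) := by
  exact ⟨fun h => swing_of_universal a b f hf hmaps h,
    fun ⟨p, hp, hfp, h⟩ => universal_of_swing a b f hf hmaps p hp hfp h⟩
end

section
/- Let I ⊆ ℝ be a closed bounded interval and f : I → I a continuous map admitting no 2-cycle. Then f is universal for the first Sharkovsky class if and only if there exists a point p ∈ I with f(p) = p such that for every r > 0: inf f([p, p + r] ∩ I) < p < sup f([p, p + r] ∩ I) and inf f([p − r, p] ∩ I) < p < sup f([p − r, p] ∩ I). -/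
/-- The hypothesis that `f` has no 2-cycle on `[a,b]`. -/
def NoTwo (a b : ℝ) (f : ℝ → ℝ) : Prop :=
  ¬ ∃ x ∈ Set.Icc a b, ∃ y ∈ Set.Icc a b, x ≠ y ∧ f x = y ∧ f y = x

theorem two_step {a b : ℝ} {f : ℝ → ℝ}
    (hf : ContinuousOn f (Set.Icc a b))
    (hmaps : Set.MapsTo f (Set.Icc a b) (Set.Icc a b))
    (hno2 : NoTwo a b f) {x : ℝ} (hx : x ∈ Set.Icc a b) (hxf : x < f x) : x < f (f x) := by
  by_contra hcon
  push Not at hcon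
  have hff : ContinuousOn (fun y => f (f y)) (Set.Icc a b) := hf.comp hf hmaps
  have hfix : ∀ y ∈ Set.Icc a b, f (f y) = y → f y = y := by
    intro y hy h
    by_contra hne
    exact hno2 ⟨y, hy, f y, hmaps hy, fun h' => hne h'.symm, rfl, h⟩
  have hax : Set.Icc a x ⊆ Set.Icc a b := Set.Icc_subset_Icc_right hx.2
  -- the set of fixed points of `f ∘ f` to the left of `x`
  set S : Set ℝ := {y ∈ Set.Icc a x | f (f y) - y = 0} with hS
  have hcS : IsCompact S := by
    have hc : ContinuousOn (fun y => f (f y) - y) (Set.Icc a x) :=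
      (hff.mono hax).sub continuousOn_id
    have : IsClosed S := hc.preimage_isClosed_of_isClosed isClosed_Icc isClosed_singleton
    exact isCompact_Icc.of_isClosed_subset this (fun y hy => hy.1)
  have hne : S.Nonempty := by
    have hc : ContinuousOn (fun y => f (f y) - y) (Set.Icc a x) :=
      (hff.mono hax).sub continuousOn_id
    have ha : a ∈ Set.Icc a b := ⟨le_refl _, hx.1.trans hx.2⟩
    have h1 : 0 ≤ f (f a) - a := by linarith [(hmaps (hmaps ha)).1]
    have h2 : f (f x) - x ≤ 0 := by linarith
    obtain ⟨y, hy, hy0⟩ := intermediate_value_Icc' hx.1 hc ⟨h2, h1⟩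
    exact ⟨y, hy, hy0⟩
  obtain ⟨u, huS, hmax⟩ := hcS.exists_isGreatest hne
  have huI : u ∈ Set.Icc a b := hax huS.1
  have hfu : f u = u := hfix u huI (by linarith [huS.2])
  have hux : u < x := by
    rcases lt_or_eq_of_le huS.1.2 with h | h
    · exact h
    · subst h; linarith
  -- no fixed points of `f` in `(u,x]`
  have hup : ∀ y ∈ Set.Ioc u x, y < f y := by
    intro y hy
    by_contra hle
    push Not at hle
    have hyx : Set.Icc y x ⊆ Set.Icc a b :=
      Set.Icc_subset_Icc (by linarith [hy.1, huS.1.1]) hx.2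
    have hc : ContinuousOn (fun y => f y - y) (Set.Icc y x) :=
      (hf.mono hyx).sub continuousOn_id
    obtain ⟨v, hv, hv0⟩ := intermediate_value_Icc hy.2 hc
      (show (0 : ℝ) ∈ Set.Icc (f y - y) (f x - x) from ⟨by linarith, by linarith⟩)
    have hfv : f v = v := by simpa [sub_eq_zero] using hv0
    have : v ∈ S := ⟨⟨by linarith [hv.1, hy.1, huS.1.1], hv.2⟩, by rw [hfv, hfv]; ring⟩
    have := hmax this
    linarith [hv.1, hy.1]
  have hdown : ∀ y ∈ Set.Ioc u x, f (f y) < y := by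
    intro y hy
    by_contra hle
    push Not at hle
    have hyx : Set.Icc y x ⊆ Set.Icc a b :=
      Set.Icc_subset_Icc (by linarith [hy.1, huS.1.1]) hx.2
    have hc : ContinuousOn (fun y => f (f y) - y) (Set.Icc y x) :=
      (hff.mono hyx).sub continuousOn_id
    obtain ⟨v, hv, hv0⟩ := intermediate_value_Icc' hy.2 hc
      (show (0 : ℝ) ∈ Set.Icc (f (f x) - x) (f (f y) - y) from ⟨by linarith, by linarith⟩)
    have : v ∈ S := ⟨⟨by linarith [hv.1, hy.1, huS.1.1], hv.2⟩, hv0⟩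
    have := hmax this
    linarith [hv.1, hy.1]
  -- a point in `(u,x]` mapped by `f` into `(u,x]`
  have hux' : Set.Icc u x ⊆ Set.Icc a b := Set.Icc_subset_Icc huS.1.1 hx.2
  obtain ⟨y, hy, hyx⟩ := intermediate_value_Icc hux.le (hf.mono hux')
      (show x ∈ Set.Icc (f u) (f x) from ⟨by linarith, hxf.le⟩)
  have hyu : u < y := by
    rcases lt_or_eq_of_le hy.1 with h | h
    · exact h
    · subst h; linarith
  have h1 := hdown y ⟨hyu, hy.2⟩
  rw [hyx] at h1
  linarith [hy.2]

theorem no_swap {a b : ℝ} {f : ℝ → ℝ}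
    (hf : ContinuousOn f (Set.Icc a b))
    (hmaps : Set.MapsTo f (Set.Icc a b) (Set.Icc a b))
    (hno2 : NoTwo a b f) {z w : ℝ} (hz : z ∈ Set.Icc a b) (hw : w ∈ Set.Icc a b)
    (hzw : z < w) (h1 : w ≤ f z) (h2 : f w ≤ z) : False := by
  have hsub : Set.Icc z w ⊆ Set.Icc a b := Set.Icc_subset_Icc hz.1 hw.2
  obtain ⟨y, hy, hyw⟩ := intermediate_value_Icc' hzw.le (hf.mono hsub)
    (show w ∈ Set.Icc (f w) (f z) from ⟨by linarith, h1⟩)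
  have hlt : y < f y := by
    rw [hyw]
    rcases lt_or_eq_of_le hy.2 with h | h
    · exact h
    · subst h; linarith
  have := two_step hf hmaps hno2 (hsub hy) hlt
  rw [hyw] at this
  linarith [hy.1]

theorem up_forever {a b : ℝ} {f : ℝ → ℝ}
    (hf : ContinuousOn f (Set.Icc a b))
    (hmaps : Set.MapsTo f (Set.Icc a b) (Set.Icc a b))
    (hno2 : NoTwo a b f) {x : ℝ} (hx : x ∈ Set.Icc a b) (hxf : x < f x) :
    ∀ n : ℕ, x < f^[n + 1] x := by
  by_contra hcon
  push Not at hcon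
  classical
  set n := Nat.find hcon with hn
  have hn1 : f^[n + 1] x ≤ x := Nat.find_spec hcon
  have hnmin : ∀ k < n, x < f^[k + 1] x := fun k hk => not_le.1 (Nat.find_min hcon hk)
  have hmem : ∀ k, f^[k] x ∈ Set.Icc a b := fun k => hmaps.iterate k hx
  have hge : ∀ k ≤ n, x ≤ f^[k] x := by
    intro k hk
    cases k with
    | zero => simp
    | succ k => exact (hnmin k (by omega)).le
  have hstep : ∀ k, f (f^[k] x) = f^[k + 1] x := fun k => (Function.iterate_succ_apply' f k x).symm
  let T : Finset ℝ := (Finset.range (n + 1)).image (fun k => f^[k] x)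
  have hT : ∀ y, y ∈ T ↔ ∃ k ≤ n, f^[k] x = y := by
    intro y
    simp [T]
  let U : Finset ℝ := T.filter (fun y => y < f y)
  have hU : U.Nonempty := ⟨x, by
    rw [Finset.mem_filter]; exact ⟨(hT x).2 ⟨0, by omega, rfl⟩, hxf⟩⟩
  set z := U.max' hU with hzdef
  have hzU : z ∈ U := U.max'_mem hU
  rw [Finset.mem_filter] at hzU
  obtain ⟨hzT, hzlt⟩ := hzU
  obtain ⟨k, hk, hkz⟩ := (hT z).1 hzT
  have hfz : f z = f^[k + 1] x := by rw [← hkz, hstep]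
  have hkn : k < n := by
    rcases lt_or_eq_of_le hk with h | h
    · exact h
    · have h3 := hge k hk
      rw [hkz] at h3
      rw [h] at hfz
      linarith
  let V : Finset ℝ := T.filter (fun y => z < y)
  have hfzV : f z ∈ V := by
    rw [Finset.mem_filter]; exact ⟨(hT _).2 ⟨k + 1, by omega, hfz.symm⟩, hzlt⟩
  have hV : V.Nonempty := ⟨_, hfzV⟩
  set w := V.min' hV with hwdef
  have hwV : w ∈ V := V.min'_mem hV
  have hwle : w ≤ f z := V.min'_le _ hfzV
  rw [Finset.mem_filter] at hwV
  obtain ⟨hwT, hzw⟩ := hwV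
  obtain ⟨j, hj, hjw⟩ := (hT w).1 hwT
  have hfw : f w = f^[j + 1] x := by rw [← hjw, hstep]
  have hxz : x ≤ z := by rw [← hkz]; exact hge k hk
  have hwn : ¬ w < f w := by
    intro h
    have : w ≤ z := U.le_max' _ (by rw [Finset.mem_filter]; exact ⟨hwT, h⟩)
    linarith
  have hwne : f w ≠ w := by
    intro h
    have h4 : f^[n + 1 - j] w = w := Function.iterate_fixed h _
    rw [← hjw, ← Function.iterate_add_apply] at h4
    rw [show n + 1 - j + j = n + 1 by omega, hjw] at h4
    linarith
  have hwlt : f w < w := lt_of_le_of_ne (not_lt.1 hwn) hwne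
  have hfwz : f w ≤ z := by
    by_contra hlt
    push Not at hlt
    rcases lt_or_eq_of_le hj with h | h
    · have : w ≤ f w := V.min'_le _ (by
        rw [Finset.mem_filter]; exact ⟨(hT _).2 ⟨j + 1, by omega, hfw.symm⟩, hlt⟩)
      linarith
    · rw [h] at hfw; linarith
  exact no_swap hf hmaps hno2 (hkz ▸ hmem k) (hjw ▸ hmem j) hzw hwle hfwz

theorem down_forever {a b : ℝ} {f : ℝ → ℝ}
    (hf : ContinuousOn f (Set.Icc a b))
    (hmaps : Set.MapsTo f (Set.Icc a b) (Set.Icc a b))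
    (hno2 : NoTwo a b f) {x : ℝ} (hx : x ∈ Set.Icc a b) (hxf : f x < x) :
    ∀ n : ℕ, f^[n + 1] x < x := by
  have hneg : ∀ y, y ∈ Set.Icc (-b) (-a) → -y ∈ Set.Icc a b := by
    intro y hy; exact ⟨by linarith [hy.2], by linarith [hy.1]⟩
  let g : ℝ → ℝ := fun y => - f (-y)
  have hg : ContinuousOn g (Set.Icc (-b) (-a)) :=
    (hf.comp continuous_neg.continuousOn hneg).neg
  have hgm : Set.MapsTo g (Set.Icc (-b) (-a)) (Set.Icc (-b) (-a)) := by
    intro y hy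
    have := hmaps (hneg y hy)
    exact ⟨by simp only [g]; linarith [this.2], by simp only [g]; linarith [this.1]⟩
  have hgno : NoTwo (-b) (-a) g := by
    rintro ⟨u, hu, v, hv, huv, h1, h2⟩
    refine hno2 ⟨-u, hneg u hu, -v, hneg v hv, fun h => huv (neg_injective h), ?_, ?_⟩
    · simp only [g] at h1; linarith
    · simp only [g] at h2; linarith
  have hit : ∀ n, g^[n] (-x) = - f^[n] x := by
    intro n
    induction n with
    | zero => simp
    | succ n ih => rw [Function.iterate_succ_apply', Function.iterate_succ_apply', ih]; simp [g]
  intro n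
  have := up_forever hg hgm hgno (x := -x) ⟨by linarith [hx.2], by linarith [hx.1]⟩
    (by simp only [g, neg_neg]; linarith) n
  rw [hit] at this
  linarith

/-- The sequence `x` has the pattern described by the sign sequence `s`. -/
def Pat (s : ℕ → SignType) (x : ℕ → ℝ) : Prop :=
  ∀ n m, n < m → (s n = 1 → x n < x m) ∧ (s n = -1 → x m < x n) ∧ (s n = 0 → x n = x m)

theorem Pat.same {s : ℕ → SignType} {x y : ℕ → ℝ} (hx : Pat s x) (hy : Pat s y) (m n : ℕ) :
    x m < x n ↔ y m < y n := by
  have trich : ∀ t : SignType, t = 1 ∨ t = -1 ∨ t = 0 := by decide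
  rcases lt_trichotomy m n with h | h | h
  · obtain ⟨a1, a2, a3⟩ := hx m n h
    obtain ⟨b1, b2, b3⟩ := hy m n h
    rcases trich (s m) with h | h | h
    · exact iff_of_true (a1 h) (b1 h)
    · exact iff_of_false (a2 h).not_gt (b2 h).not_gt
    · exact iff_of_false (a3 h).not_lt (b3 h).not_lt
  · subst h; simp
  · obtain ⟨a1, a2, a3⟩ := hx n m h
    obtain ⟨b1, b2, b3⟩ := hy n m h
    rcases trich (s n) with h | h | h
    · exact iff_of_false (a1 h).not_gt (b1 h).not_gt
    · exact iff_of_true (a2 h) (b2 h)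
    · exact iff_of_false (a3 h).not_gt (b3 h).not_gt

theorem exists_pat {a b : ℝ} {f : ℝ → ℝ}
    (hf : ContinuousOn f (Set.Icc a b))
    (hmaps : Set.MapsTo f (Set.Icc a b) (Set.Icc a b))
    (hno2 : NoTwo a b f) {x : ℝ} (hx : x ∈ Set.Icc a b) :
    ∃ s : ℕ → SignType, (∀ n, s n = 0 → s (n + 1) = 0) ∧ Pat s (fun n => f^[n] x) := by
  have hmem : ∀ k, f^[k] x ∈ Set.Icc a b := fun k => hmaps.iterate k hx
  have hstep : ∀ k, f (f^[k] x) = f^[k + 1] x := fun k => (Function.iterate_succ_apply' f k x).symm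
  refine ⟨fun n => SignType.sign (f (f^[n] x) - f^[n] x), ?_, ?_⟩
  · intro n hn
    rw [sign_eq_zero_iff, sub_eq_zero] at hn ⊢
    rw [← hstep, hn, hn]
  · intro n m hnm
    obtain ⟨k, rfl⟩ : ∃ k, m = (k + 1) + n := ⟨m - n - 1, by omega⟩
    simp only [Function.iterate_add_apply f (k + 1) n x]
    refine ⟨fun h => ?_, fun h => ?_, fun h => ?_⟩
    · rw [sign_eq_one_iff] at h
      exact up_forever hf hmaps hno2 (hmem n) (by linarith) k
    · rw [sign_eq_neg_one_iff] at h
      exact down_forever hf hmaps hno2 (hmem n) (by linarith) k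
    · rw [sign_eq_zero_iff, sub_eq_zero] at h
      exact (Function.iterate_fixed h _).symm

/-- All four side transitions occur arbitrarily close to `p`. -/
def Cond (a b : ℝ) (f : ℝ → ℝ) (p : ℝ) : Prop :=
  ∀ ε > 0, ∀ s t : SignType, s ≠ 0 → t ≠ 0 →
    ∃ x ∈ Set.Icc a b, |x - p| < ε ∧ SignType.sign (p - x) = s ∧ SignType.sign (p - f x) = t

theorem orbit_nested {F : ℝ → ℝ} (hF : Continuous F) {K : ℕ → Set ℝ}
    (hK : ∀ n, IsCompact (K n)) (hne : ∀ n, (K n).Nonempty)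
    (hsub : ∀ n, K (n + 1) ⊆ F '' K n) : ∃ q, ∀ n, F^[n] q ∈ K n := by
  let E : ℕ → Set ℝ := fun N => ⋂ k ∈ Set.Iic N, (F^[k]) ⁻¹' K k
  have hEc : ∀ N, IsClosed (E N) := fun N =>
    isClosed_biInter fun k _ => (hK k).isClosed.preimage (hF.iterate k)
  have hmemE : ∀ N x, x ∈ E N ↔ ∀ k ≤ N, F^[k] x ∈ K k := by
    intro N x; simp [E]
  have hsurj : ∀ N, ∀ y ∈ K N, ∃ x ∈ E N, F^[N] x = y := by
    intro N
    induction N with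
    | zero =>
      intro y hy
      refine ⟨y, (hmemE _ _).2 ?_, rfl⟩
      intro k hk
      obtain rfl : k = 0 := by omega
      exact hy
    | succ N ih =>
      intro y hy
      obtain ⟨v, hv, hvy⟩ := hsub N hy
      obtain ⟨x, hx, hxv⟩ := ih v hv
      have hfx : F^[N + 1] x = y := by rw [Function.iterate_succ_apply', hxv, hvy]
      refine ⟨x, (hmemE _ _).2 ?_, hfx⟩
      intro k hk
      rcases Nat.lt_or_ge k (N + 1) with h | h
      · exact (hmemE _ _).1 hx k (by omega)
      · obtain rfl : k = N + 1 := by omega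
        rw [hfx]; exact hy
  have hE0 : IsCompact (E 0) := (hK 0).of_isClosed_subset (hEc 0) (fun x hx =>
    (hmemE _ _).1 hx 0 le_rfl)
  obtain ⟨q, hq⟩ := IsCompact.nonempty_iInter_of_sequence_nonempty_isCompact_isClosed E
    (fun N x hx => (hmemE _ _).2 fun k hk => (hmemE _ _).1 hx k (by omega))
    (fun N => by
      obtain ⟨y, hy⟩ := hne N
      obtain ⟨x, hx, _⟩ := hsurj N y hy
      exact ⟨x, hx⟩) hE0 hEc
  refine ⟨q, fun n => ?_⟩
  exact (hmemE _ _).1 (Set.mem_iInter.1 hq n) n le_rfl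

theorem sign_uIcc {p z w x : ℝ} {s : SignType} (hs : s ≠ 0)
    (hz : SignType.sign (p - z) = s) (hw : SignType.sign (p - w) = s) (hx : x ∈ Set.uIcc z w) :
    SignType.sign (p - x) = s ∧ min |z - p| |w - p| ≤ |x - p| ∧ |x - p| ≤ max |z - p| |w - p| := by
  have trich : ∀ t : SignType, t = 1 ∨ t = -1 ∨ t = 0 := by decide
  rw [Set.mem_uIcc] at hx
  rcases trich s with rfl | rfl | rfl
  · rw [sign_eq_one_iff] at *
    have : 0 < p - x := by rcases hx with h | h <;> linarith [h.1, h.2]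
    refine ⟨this, ?_⟩
    rw [abs_of_neg (by linarith : z - p < 0), abs_of_neg (by linarith : w - p < 0),
      abs_of_neg (by linarith : x - p < 0), min_le_iff, le_max_iff]
    rcases hx with h | h
    · exact ⟨Or.inr (by linarith [h.2]), Or.inl (by linarith [h.1])⟩
    · exact ⟨Or.inl (by linarith [h.2]), Or.inr (by linarith [h.1])⟩
  · rw [sign_eq_neg_one_iff] at *
    have : p - x < 0 := by rcases hx with h | h <;> linarith [h.1, h.2]
    refine ⟨this, ?_⟩
    rw [abs_of_pos (by linarith : 0 < z - p), abs_of_pos (by linarith : 0 < w - p),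
      abs_of_pos (by linarith : 0 < x - p), min_le_iff, le_max_iff]
    rcases hx with h | h
    · exact ⟨Or.inl (by linarith [h.1]), Or.inr (by linarith [h.2])⟩
    · exact ⟨Or.inr (by linarith [h.1]), Or.inl (by linarith [h.2])⟩
  · exact absurd rfl hs

theorem mem_uIcc_of_sign {p w x : ℝ} {s : SignType} (hs : s ≠ 0)
    (hx : SignType.sign (p - x) = s) (hw : SignType.sign (p - w) = s) (h : |x - p| ≤ |w - p|) :
    x ∈ Set.uIcc p w := by
  have trich : ∀ t : SignType, t = 1 ∨ t = -1 ∨ t = 0 := by decide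
  rw [Set.mem_uIcc]
  rcases trich s with rfl | rfl | rfl
  · rw [sign_eq_one_iff] at *
    rw [abs_of_neg (by linarith : w - p < 0), abs_of_neg (by linarith : x - p < 0)] at h
    exact Or.inr ⟨by linarith, by linarith⟩
  · rw [sign_eq_neg_one_iff] at *
    rw [abs_of_pos (by linarith : 0 < w - p), abs_of_pos (by linarith : 0 < x - p)] at h
    exact Or.inl ⟨by linarith, by linarith⟩
  · exact absurd rfl hs

theorem cond_step {a b p : ℝ} {f : ℝ → ℝ} (hf : ContinuousOn f (Set.Icc a b))
    (hC : Cond a b f p) (ε : ℝ) (hε : 0 < ε) (s t : SignType) (hs : s ≠ 0) (ht : t ≠ 0) :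
    ∃ zw : ℝ × ℝ, zw.1 ∈ Set.Icc a b ∧ zw.2 ∈ Set.Icc a b ∧ |zw.1 - p| < ε ∧ |zw.2 - p| < ε ∧
      SignType.sign (p - zw.1) = s ∧ SignType.sign (p - zw.2) = s ∧ f zw.1 = p ∧
      SignType.sign (p - f zw.2) = t := by
  obtain ⟨u, hu, hu1, hu2, hu3⟩ := hC ε hε s 1 hs (by decide)
  obtain ⟨v, hv, hv1, hv2, hv3⟩ := hC ε hε s (-1) hs (by decide)
  obtain ⟨w, hw, hw1, hw2, hw3⟩ := hC ε hε s t hs ht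
  rw [sign_eq_one_iff] at hu3
  rw [sign_eq_neg_one_iff] at hv3
  have hsub : Set.uIcc u v ⊆ Set.Icc a b := Set.uIcc_subset_Icc hu hv
  obtain ⟨z, hz, hzp⟩ := intermediate_value_uIcc (hf.mono hsub)
    (show p ∈ Set.uIcc (f u) (f v) from Set.mem_uIcc.2 (Or.inl ⟨by linarith, by linarith⟩))
  obtain ⟨h1, h2, h3⟩ := sign_uIcc hs hu2 hv2 hz
  exact ⟨(z, w), hsub hz, hw, lt_of_le_of_lt h3 (max_lt hu1 hv1), hw1, h1, hw2, hzp, hw3⟩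

theorem realize {a b p : ℝ} {f : ℝ → ℝ} (hp : p ∈ Set.Icc a b)
    (hf : ContinuousOn f (Set.Icc a b))
    (hmaps : Set.MapsTo f (Set.Icc a b) (Set.Icc a b)) (hfp : f p = p)
    (hC : Cond a b f p) (s : ℕ → SignType) (hs : ∀ n, s n = 0 → s (n + 1) = 0) :
    ∃ q ∈ Set.Icc a b, Pat s (fun n => f^[n] q) := by
  classical
  have hab : a ≤ b := hp.1.trans hp.2
  let u : ℕ → SignType := fun n => if s n = 0 then 1 else s n
  have hu : ∀ n, u n ≠ 0 := by
    intro n; simp only [u]; split_ifs with h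
    · decide
    · exact h
  have hus : ∀ n, s n ≠ 0 → u n = s n := fun n h => by simp [u, h]
  choose G hG using fun (e : {e : ℝ // 0 < e}) (n : ℕ) =>
    cond_step hf hC e.1 e.2 (u n) (u (n + 1)) (hu n) (hu (n + 1))
  have habs : ∀ {x : ℝ} {t : SignType}, t ≠ 0 → SignType.sign (p - x) = t → 0 < |x - p| := by
    intro x t ht h
    rw [abs_pos]
    intro h0
    apply ht
    rw [← h, show p - x = 0 by linarith, sign_zero]
  let nxt : ℕ → {e : ℝ // 0 < e} → {e : ℝ // 0 < e} := fun n e =>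
    ⟨min (min |(G e n).1 - p| |(G e n).2 - p|) |f (G e n).2 - p|, by
      obtain ⟨_, _, _, _, h5, h6, _, h8⟩ := hG e n
      exact lt_min (lt_min (habs (hu n) h5) (habs (hu n) h6)) (habs (hu (n + 1)) h8)⟩
  let e : ℕ → {e : ℝ // 0 < e} := fun n => Nat.rec ⟨1, one_pos⟩ (fun n x => nxt n x) n
  have he : ∀ n, (e (n + 1)).1 =
    min (min |(G (e n) n).1 - p| |(G (e n) n).2 - p|) |f (G (e n) n).2 - p| := fun n => rfl
  let z : ℕ → ℝ := fun n => (G (e n) n).1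
  let w : ℕ → ℝ := fun n => (G (e n) n).2
  have he' : ∀ n, (e (n + 1)).1 = min (min |z n - p| |w n - p|) |f (w n) - p| := he
  have hzw : ∀ n, z n ∈ Set.Icc a b ∧ w n ∈ Set.Icc a b ∧ |z n - p| < (e n).1 ∧
      |w n - p| < (e n).1 ∧
      SignType.sign (p - z n) = u n ∧ SignType.sign (p - w n) = u n ∧ f (z n) = p ∧
      SignType.sign (p - f (w n)) = u (n + 1) := fun n => hG (e n) n
  have hanti : ∀ n, (e (n + 1)).1 ≤ (e n).1 := by
    intro n
    rw [he']
    exact (min_le_left _ _).trans ((min_le_left _ _).trans (hzw n).2.2.1.le)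
  have hanti' : Antitone (fun n => (e n).1) := antitone_nat_of_succ_le hanti
  let K : ℕ → Set ℝ := fun n => if s n = 0 then {p} else Set.uIcc (z n) (w n)
  have hK0 : ∀ n, s n = 0 → K n = {p} := fun n h => by simp [K, h]
  have hK1 : ∀ n, s n ≠ 0 → K n = Set.uIcc (z n) (w n) := fun n h => by simp [K, h]
  have hKI : ∀ n, K n ⊆ Set.Icc a b := by
    intro n
    by_cases h : s n = 0
    · rw [hK0 n h]; simpa using hp
    · rw [hK1 n h]; exact Set.uIcc_subset_Icc (hzw n).1 (hzw n).2.1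
  let F : ℝ → ℝ := Set.IccExtend hab ((Set.Icc a b).restrict f)
  have hF : Continuous F := hf.restrict.Icc_extend'
  have hFf : ∀ x ∈ Set.Icc a b, F x = f x := by
    intro x hx
    simp only [F]
    rw [Set.IccExtend_of_mem hab _ hx]; rfl
  have hsubK : ∀ n, K (n + 1) ⊆ F '' K n := by
    intro n
    by_cases h : s n = 0
    · rw [hK0 n h, hK0 (n + 1) (hs n h)]
      simp [hFf p hp, hfp]
    · obtain ⟨h1, h2, h3, h4, h5, h6, h7, h8⟩ := hzw n
      rw [hK1 n h]
      have hiv : Set.uIcc p (f (w n)) ⊆ F '' Set.uIcc (z n) (w n) := by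
        have := intermediate_value_uIcc (hF.continuousOn (s := Set.uIcc (z n) (w n)))
        rwa [hFf _ h1, hFf _ h2, h7] at this
      refine subset_trans ?_ hiv
      by_cases h' : s (n + 1) = 0
      · rw [hK0 _ h']
        simp
      · rw [hK1 _ h']
        intro x hx
        obtain ⟨k1, k2, k3, k4, k5, k6, k7, k8⟩ := hzw (n + 1)
        obtain ⟨m1, m2, m3⟩ := sign_uIcc (hu (n + 1)) k5 k6 hx
        refine mem_uIcc_of_sign (hu (n + 1)) m1 h8 ?_
        refine (m3.trans (max_lt k3 k4).le).trans ?_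
        rw [he']; exact min_le_right _ _
  obtain ⟨q, hq⟩ := orbit_nested hF (K := K)
    (fun n => by
      by_cases h : s n = 0
      · rw [hK0 n h]; exact isCompact_singleton
      · rw [hK1 n h]; exact isCompact_uIcc)
    (fun n => by
      by_cases h : s n = 0
      · rw [hK0 n h]; exact Set.singleton_nonempty p
      · rw [hK1 n h]; exact Set.nonempty_uIcc) hsubK
  have hqI : q ∈ Set.Icc a b := hKI 0 (hq 0)
  have hiter : ∀ n, F^[n] q = f^[n] q := by
    intro n
    induction n with
    | zero => rfl
    | succ n ih =>
      rw [Function.iterate_succ_apply', Function.iterate_succ_apply', ih]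
      exact hFf _ (hmaps.iterate n hqI)
  refine ⟨q, hqI, ?_⟩
  intro n m hnm
  have hn := hq n
  have hm := hq m
  rw [hiter] at hn hm
  show (s n = 1 → f^[n] q < f^[m] q) ∧ (s n = -1 → f^[m] q < f^[n] q) ∧
    (s n = 0 → f^[n] q = f^[m] q)
  generalize f^[n] q = x at *
  generalize f^[m] q = y at *
  have hy : |y - p| < (e (n + 1)).1 := by
    refine lt_of_lt_of_le ?_ (hanti' (show n + 1 ≤ m from hnm))
    by_cases h : s m = 0
    · rw [hK0 m h] at hm
      rw [Set.mem_singleton_iff.1 hm]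
      simpa using (e m).2
    · rw [hK1 m h] at hm
      obtain ⟨k1, k2, k3, k4, k5, k6, k7, k8⟩ := hzw m
      exact lt_of_le_of_lt (sign_uIcc (hu m) k5 k6 hm).2.2 (max_lt k3 k4)
  have hx : s n ≠ 0 → SignType.sign (p - x) = s n ∧ (e (n + 1)).1 ≤ |x - p| := by
    intro h
    rw [hK1 n h] at hn
    obtain ⟨k1, k2, k3, k4, k5, k6, k7, k8⟩ := hzw n
    obtain ⟨m1, m2, m3⟩ := sign_uIcc (hu n) k5 k6 hn
    refine ⟨m1.trans (hus n h), ?_⟩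
    rw [he']
    exact (min_le_left _ _).trans m2
  refine ⟨fun h => ?_, fun h => ?_, fun h => ?_⟩
  · obtain ⟨h1, h2⟩ := hx (by rw [h]; decide)
    rw [h, sign_eq_one_iff] at h1
    rw [abs_of_neg (by linarith : x - p < 0)] at h2
    linarith [(abs_lt.1 hy).1]
  · obtain ⟨h1, h2⟩ := hx (by rw [h]; decide)
    rw [h, sign_eq_neg_one_iff] at h1
    rw [abs_of_pos (by linarith : 0 < x - p)] at h2
    linarith [(abs_lt.1 hy).2]
  · have hz : ∀ k, s (n + k) = 0 := by
      intro k
      induction k with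
      | zero => exact h
      | succ k ih => exact hs _ ih
    have hm0 : s m = 0 := by
      have := hz (m - n)
      rwa [show n + (m - n) = m by omega] at this
    rw [hK0 n h] at hn
    rw [hK0 m hm0] at hm
    rw [Set.mem_singleton_iff.1 hn, Set.mem_singleton_iff.1 hm]

theorem universal_of_cond {a b p : ℝ} {f : ℝ → ℝ} (hp : p ∈ Set.Icc a b)
    (hf : ContinuousOn f (Set.Icc a b))
    (hmaps : Set.MapsTo f (Set.Icc a b) (Set.Icc a b)) (hfp : f p = p)
    (hC : Cond a b f p) : IsUniversalF1 a b f := by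
  intro c d _ g hg hgm hgno x hx
  obtain ⟨s, hs, hpat⟩ := exists_pat hg hgm hgno hx
  obtain ⟨q, hq, hqpat⟩ := realize hp hf hmaps hfp hC s hs
  exact ⟨q, hq, hpat.same hqpat⟩

/-- A model map: `x ↦ x sin(1/x) / 2`. -/
noncomputable def model (x : ℝ) : ℝ := x * Real.sin x⁻¹ / 2

theorem model_abs (x : ℝ) : |model x| ≤ |x| / 2 := by
  unfold model
  rw [abs_div, abs_mul, abs_two]
  have := mul_le_mul_of_nonneg_left (Real.abs_sin_le_one x⁻¹) (abs_nonneg x)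
  linarith

theorem model_cont : Continuous model := by
  rw [continuous_iff_continuousAt]
  intro x
  by_cases hx : x = 0
  · subst hx
    have h0 : model 0 = 0 := by simp [model]
    unfold ContinuousAt
    rw [h0]
    refine squeeze_zero_norm (a := fun x => |x| / 2) (fun x => model_abs x) ?_
    have : Continuous (fun x : ℝ => |x| / 2) := by fun_prop
    simpa using this.tendsto 0
  · unfold model
    have : ContinuousAt (fun x : ℝ => x⁻¹) x := continuousAt_inv₀ hx
    fun_prop

theorem model_maps : Set.MapsTo model (Set.Icc (-1) 1) (Set.Icc (-1) 1) := by
  intro x hx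
  have h1 : |x| ≤ 1 := abs_le.2 hx
  have h2 := model_abs x
  exact abs_le.1 (by linarith)

theorem model_no2 : NoTwo (-1) 1 model := by
  rintro ⟨x, -, y, -, hxy, h1, h2⟩
  have k1 := model_abs x
  have k2 := model_abs y
  rw [h1] at k1
  rw [h2] at k2
  have hx0 : |x| = 0 := by linarith [abs_nonneg x, abs_nonneg y]
  have hy0 : |y| = 0 := by linarith [abs_nonneg x, abs_nonneg y]
  rw [abs_eq_zero] at hx0 hy0
  exact hxy (hx0.trans hy0.symm)

theorem model_cond : Cond (-1) 1 model 0 := by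
  have trich : ∀ t : SignType, t ≠ 0 → t = 1 ∨ t = -1 := by decide
  -- positive points with either sign of the image
  have key : ∀ ε > (0 : ℝ), ∀ σ : ℝ, σ = 1 ∨ σ = -1 →
      ∃ x : ℝ, 0 < x ∧ x < ε ∧ x ≤ 1 ∧ Real.sin x⁻¹ = σ := by
    intro ε hε σ hσ
    obtain ⟨n, hn⟩ := exists_nat_gt (ε⁻¹ + 2)
    have hεi : 0 < ε⁻¹ := inv_pos.2 hε
    have hpi := Real.pi_gt_three
    set y : ℝ := σ * (Real.pi / 2) + n * (2 * Real.pi) with hy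
    have hyn : (n : ℝ) - 2 < y ∧ 1 ≤ y := by
      have : (6 : ℝ) * n ≤ n * (2 * Real.pi) := by nlinarith
      have hpi4 := Real.pi_le_four
      rcases hσ with rfl | rfl <;> constructor <;> nlinarith
    have hypos : 0 < y := by linarith
    refine ⟨y⁻¹, inv_pos.2 hypos, ?_, ?_, ?_⟩
    · exact inv_lt_of_inv_lt₀ hε (by linarith)
    · exact inv_le_one_of_one_le₀ hyn.2
    · rw [inv_inv, hy, Real.sin_add_nat_mul_two_pi]
      rcases hσ with rfl | rfl <;> simp
  have neg : ∀ x, model (-x) = model x := by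
    intro x; simp [model, inv_neg]
  intro ε hε s t hs ht
  obtain ⟨τ, hτ, hτt⟩ : ∃ τ : ℝ, (τ = 1 ∨ τ = -1) ∧ SignType.sign (-τ) = t := by
    rcases trich t ht with rfl | rfl
    · exact ⟨-1, Or.inr rfl, by simp⟩
    · exact ⟨1, Or.inl rfl, by simp⟩
  obtain ⟨x, hx0, hxε, hx1, hsin⟩ := key ε hε τ hτ
  have hmod : SignType.sign (0 - model x) = t := by
    have : 0 - model x = (x / 2) * (-τ) := by unfold model; rw [hsin]; ring
    rw [this, sign_mul, sign_pos (by linarith : 0 < x / 2), one_mul, hτt]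
  rcases trich s hs with rfl | rfl
  · refine ⟨-x, ⟨by linarith, by linarith⟩, ?_, ?_, ?_⟩
    · rw [sub_zero, abs_neg, abs_of_pos hx0]; exact hxε
    · rw [sign_eq_one_iff]; linarith
    · rw [neg]; exact hmod
  · refine ⟨x, ⟨by linarith, by linarith⟩, ?_, ?_, hmod⟩
    · rw [sub_zero, abs_of_pos hx0]; exact hxε
    · rw [sign_eq_neg_one_iff]; linarith

/-- The periodic pattern up, up, down, down. -/
def uudd (n : ℕ) : SignType := if n % 4 < 2 then 1 else -1

theorem uudd_ne (n : ℕ) : uudd n ≠ 0 := by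
  unfold uudd; split_ifs <;> decide

theorem cond_of_universal {a b : ℝ} {f : ℝ → ℝ}
    (hf : ContinuousOn f (Set.Icc a b))
    (hmaps : Set.MapsTo f (Set.Icc a b) (Set.Icc a b))
    (hno2 : NoTwo a b f) (hU : IsUniversalF1 a b f) :
    ∃ p ∈ Set.Icc a b, f p = p ∧ Cond a b f p := by
  obtain ⟨x, hx, hxpat⟩ := realize (p := 0) (by norm_num) model_cont.continuousOn model_maps
    (by simp [model]) model_cond uudd (fun n h => absurd h (uudd_ne n))
  obtain ⟨q, hq, hqo⟩ := hU (-1) 1 (by norm_num) model model_cont.continuousOn model_maps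
    model_no2 x hx
  set y : ℕ → ℝ := fun n => f^[n] q with hy
  have hyI : ∀ n, y n ∈ Set.Icc a b := fun n => hmaps.iterate n hq
  have hyf : ∀ n, f (y n) = y (n + 1) := fun n => (Function.iterate_succ_apply' f n q).symm
  have up : ∀ n m, n < m → n % 4 < 2 → y n < y m := fun n m h h2 =>
    (hqo n m).1 ((hxpat n m h).1 (by simp [uudd, h2]))
  have dn : ∀ n m, n < m → ¬ n % 4 < 2 → y m < y n := fun n m h h2 =>
    (hqo m n).1 ((hxpat n m h).2.1 (by simp [uudd, h2]))
  -- the four subsequences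
  have mono0 : StrictMono (fun k => y (4 * k)) := strictMono_nat_of_lt_succ fun k =>
    up _ _ (by omega) (by omega)
  have mono2 : StrictAnti (fun k => y (4 * k + 2)) := strictAnti_nat_of_succ_lt fun k =>
    dn _ _ (by omega) (by omega)
  have t0 := tendsto_atTop_ciSup mono0.monotone ⟨b, by rintro _ ⟨k, rfl⟩; exact (hyI _).2⟩
  have t2 := tendsto_atTop_ciInf mono2.antitone ⟨a, by rintro _ ⟨k, rfl⟩; exact (hyI _).1⟩
  set l := ⨆ k, y (4 * k) with hl
  set r := ⨅ k, y (4 * k + 2) with hr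
  have t0' : Filter.Tendsto (fun k => y (4 * (k + 1))) Filter.atTop (nhds l) :=
    t0.comp (Filter.tendsto_add_atTop_nat 1)
  have t2' : Filter.Tendsto (fun k => y (4 * (k + 1) + 2)) Filter.atTop (nhds r) :=
    t2.comp (Filter.tendsto_add_atTop_nat 1)
  have t1 : Filter.Tendsto (fun k => y (4 * k + 1)) Filter.atTop (nhds l) :=
    tendsto_of_tendsto_of_tendsto_of_le_of_le t0 t0'
      (fun k => (up _ _ (by omega) (by omega)).le) (fun k => (up _ _ (by omega) (by omega)).le)
  have t3 : Filter.Tendsto (fun k => y (4 * k + 3)) Filter.atTop (nhds r) :=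
    tendsto_of_tendsto_of_tendsto_of_le_of_le t2' t2
      (fun k => (dn _ _ (by omega) (by omega)).le) (fun k => (dn _ _ (by omega) (by omega)).le)
  have hlI : l ∈ Set.Icc a b := isClosed_Icc.mem_of_tendsto t0 (Filter.Eventually.of_forall
    fun k => hyI _)
  have hrI : r ∈ Set.Icc a b := isClosed_Icc.mem_of_tendsto t2 (Filter.Eventually.of_forall
    fun k => hyI _)
  have lim : ∀ (i : ℕ → ℕ) (v : ℝ), v ∈ Set.Icc a b →
      Filter.Tendsto (fun k => y (i k)) Filter.atTop (nhds v) →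
      Filter.Tendsto (fun k => y (i k + 1)) Filter.atTop (nhds (f v)) := by
    intro i v hv h
    have h1 : Filter.Tendsto (fun k => y (i k)) Filter.atTop (nhdsWithin v (Set.Icc a b)) :=
      tendsto_nhdsWithin_iff.2 ⟨h, Filter.Eventually.of_forall fun k => hyI _⟩
    have := (hf v hv).tendsto.comp h1
    refine this.congr fun k => ?_
    exact hyf _
  have hfl : f l = l := tendsto_nhds_unique (lim (fun k => 4 * k) l hlI t0) t1
  have hflr : f l = r := tendsto_nhds_unique (lim (fun k => 4 * k + 1) l hlI t1) t2
  have hlr : r = l := hflr.symm.trans hfl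
  rw [hlr] at t2 t3
  have tall : ∀ j < 4, Filter.Tendsto (fun k => y (4 * k + j)) Filter.atTop (nhds l) := by
    intro j hj
    interval_cases j
    · exact t0
    · exact t1
    · exact t2
    · exact t3
  have hup : ∀ n, n % 4 < 2 → y n < l := by
    intro n hn
    have h1 : y n < y (4 * (n + 1)) := up _ _ (by omega) hn
    exact lt_of_lt_of_le h1 (mono0.monotone.ge_of_tendsto t0 (n + 1))
  have hdn : ∀ n, ¬ n % 4 < 2 → l < y n := by
    intro n hn
    have h1 : y (4 * (n + 1) + 2) < y n := dn _ _ (by omega) hn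
    exact lt_of_le_of_lt (mono2.antitone.le_of_tendsto t2 (n + 1)) h1
  have hsg : ∀ n, SignType.sign (l - y n) = uudd n := by
    intro n
    unfold uudd
    split_ifs with h
    · rw [sign_eq_one_iff]; linarith [hup n h]
    · rw [sign_eq_neg_one_iff]; linarith [hdn n h]
  refine ⟨l, hlI, hfl, ?_⟩
  intro ε hε s t hs ht
  have htr : ∀ s t : SignType, s ≠ 0 → t ≠ 0 → ∃ j < 4, uudd j = s ∧ uudd (j + 1) = t := by
    decide
  obtain ⟨j, hj, hjs, hjt⟩ := htr s t hs ht
  obtain ⟨k, hk⟩ := ((Metric.tendsto_nhds.1 (tall j hj)) ε hε).exists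
  have hper : ∀ i, uudd (4 * k + i) = uudd i := by
    intro i; unfold uudd; rw [Nat.mul_add_mod]
  refine ⟨y (4 * k + j), hyI _, ?_, ?_, ?_⟩
  · rwa [Real.dist_eq] at hk
  · rw [hsg, hper, hjs]
  · rw [hyf, hsg, add_assoc, hper, hjt]

/-- Characterization of universal maps in the first Sharkovsky class via infima and
suprema of images of small one-sided neighbourhoods of some fixed point. -/
theorem stmt_18 (a b : ℝ) (hab : a ≤ b) (f : ℝ → ℝ)
    (hf : ContinuousOn f (Set.Icc a b))
    (hmaps : Set.MapsTo f (Set.Icc a b) (Set.Icc a b))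
    (hno2 : ¬ ∃ x ∈ Set.Icc a b, ∃ y ∈ Set.Icc a b, x ≠ y ∧ f x = y ∧ f y = x) :
    IsUniversalF1 a b f ↔
    ∃ p ∈ Set.Icc a b, f p = p ∧
      ∀ r > (0 : ℝ),
        sInf (f '' (Set.Icc p (p + r) ∩ Set.Icc a b)) < p ∧
        p < sSup (f '' (Set.Icc p (p + r) ∩ Set.Icc a b)) ∧
        sInf (f '' (Set.Icc (p - r) p ∩ Set.Icc a b)) < p ∧
        p < sSup (f '' (Set.Icc (p - r) p ∩ Set.Icc a b)) := by
  have hbb : ∀ S : Set ℝ, BddBelow (f '' (S ∩ Set.Icc a b)) := by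
    intro S
    refine ⟨a, ?_⟩
    rintro _ ⟨x, hx, rfl⟩
    exact (hmaps hx.2).1
  have hba : ∀ S : Set ℝ, BddAbove (f '' (S ∩ Set.Icc a b)) := by
    intro S
    refine ⟨b, ?_⟩
    rintro _ ⟨x, hx, rfl⟩
    exact (hmaps hx.2).2
  constructor
  · intro hU
    obtain ⟨p, hp, hfp, hC⟩ := cond_of_universal hf hmaps hno2 hU
    refine ⟨p, hp, hfp, fun r hr => ⟨?_, ?_, ?_, ?_⟩⟩
    · obtain ⟨x, hx, h1, h2, h3⟩ := hC r hr (-1) 1 (by decide) (by decide)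
      rw [sign_eq_neg_one_iff] at h2
      rw [sign_eq_one_iff] at h3
      rw [abs_lt] at h1
      exact lt_of_le_of_lt (csInf_le (hbb _)
        ⟨x, ⟨⟨by linarith, by linarith⟩, hx⟩, rfl⟩) (by linarith)
    · obtain ⟨x, hx, h1, h2, h3⟩ := hC r hr (-1) (-1) (by decide) (by decide)
      rw [sign_eq_neg_one_iff] at h2 h3
      rw [abs_lt] at h1
      exact lt_of_lt_of_le (by linarith) (le_csSup (hba _)
        ⟨x, ⟨⟨by linarith, by linarith⟩, hx⟩, rfl⟩)
    · obtain ⟨x, hx, h1, h2, h3⟩ := hC r hr 1 1 (by decide) (by decide)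
      rw [sign_eq_one_iff] at h2 h3
      rw [abs_lt] at h1
      exact lt_of_le_of_lt (csInf_le (hbb _)
        ⟨x, ⟨⟨by linarith, by linarith⟩, hx⟩, rfl⟩) (by linarith)
    · obtain ⟨x, hx, h1, h2, h3⟩ := hC r hr 1 (-1) (by decide) (by decide)
      rw [sign_eq_one_iff] at h2
      rw [sign_eq_neg_one_iff] at h3
      rw [abs_lt] at h1
      exact lt_of_lt_of_le (by linarith) (le_csSup (hba _)
        ⟨x, ⟨⟨by linarith, by linarith⟩, hx⟩, rfl⟩)
  · rintro ⟨p, hp, hfp, hC⟩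
    refine universal_of_cond hp hf hmaps hfp ?_
    have trich : ∀ t : SignType, t ≠ 0 → t = 1 ∨ t = -1 := by decide
    intro ε hε s t hs ht
    obtain ⟨h1, h2, h3, h4⟩ := hC (ε / 2) (by linarith)
    have hneR : (f '' (Set.Icc p (p + ε / 2) ∩ Set.Icc a b)).Nonempty :=
      ⟨_, p, ⟨⟨by linarith, by linarith⟩, hp⟩, rfl⟩
    have hneL : (f '' (Set.Icc (p - ε / 2) p ∩ Set.Icc a b)).Nonempty :=
      ⟨_, p, ⟨⟨by linarith, by linarith⟩, hp⟩, rfl⟩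
    have ne : ∀ x, f x ≠ p → x ≠ p := by
      rintro x h rfl; exact h hfp
    rcases trich s hs with rfl | rfl <;> rcases trich t ht with rfl | rfl
    · obtain ⟨_, ⟨x, hx, rfl⟩, hlt⟩ := exists_lt_of_csInf_lt hneL h3
      have := lt_of_le_of_ne hx.1.2 (ne x hlt.ne)
      refine ⟨x, hx.2, abs_lt.2 ⟨by linarith [hx.1.1], by linarith⟩, ?_, ?_⟩
      · rw [sign_eq_one_iff]; linarith
      · rw [sign_eq_one_iff]; linarith
    · obtain ⟨_, ⟨x, hx, rfl⟩, hlt⟩ := exists_lt_of_lt_csSup hneL h4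
      have := lt_of_le_of_ne hx.1.2 (ne x hlt.ne')
      refine ⟨x, hx.2, abs_lt.2 ⟨by linarith [hx.1.1], by linarith⟩, ?_, ?_⟩
      · rw [sign_eq_one_iff]; linarith
      · rw [sign_eq_neg_one_iff]; linarith
    · obtain ⟨_, ⟨x, hx, rfl⟩, hlt⟩ := exists_lt_of_csInf_lt hneR h1
      have := lt_of_le_of_ne hx.1.1 (ne x hlt.ne).symm
      refine ⟨x, hx.2, abs_lt.2 ⟨by linarith, by linarith [hx.1.2]⟩, ?_, ?_⟩
      · rw [sign_eq_neg_one_iff]; linarith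
      · rw [sign_eq_one_iff]; linarith
    · obtain ⟨_, ⟨x, hx, rfl⟩, hlt⟩ := exists_lt_of_lt_csSup hneR h2
      have := lt_of_le_of_ne hx.1.1 (ne x hlt.ne').symm
      refine ⟨x, hx.2, abs_lt.2 ⟨by linarith, by linarith [hx.1.2]⟩, ?_, ?_⟩
      · rw [sign_eq_neg_one_iff]; linarith
      · rw [sign_eq_neg_one_iff]; linarith
end

section
/- Define f : [−1, 1] → ℝ by f(x) = x·sin(1/x) for x ≠ 0 and f(0) = 0. Then f maps [−1, 1] into itself, is continuous, admits no 2-cycle, and is universal for the first Sharkovsky class: for every closed bounded interval J, every continuous g : J → J admitting no 2-cycle, and every p ∈ J, there exists q ∈ [−1, 1] such that the sequences (gⁿ(p))_{n≥0} and (fⁿ(q))_{n≥0} have the same order pattern. -/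
/-- Fixed points of `g ∘ g` between two points where `g ∘ g - id` changes sign. -/
lemma exists_fixed_of_sq {c d : ℝ} {g : ℝ → ℝ}
    (hg : ContinuousOn g (Set.Icc c d)) (hm : Set.MapsTo g (Set.Icc c d) (Set.Icc c d))
    (h2 : ¬ ∃ x ∈ Set.Icc c d, ∃ y ∈ Set.Icc c d, x ≠ y ∧ g x = y ∧ g y = x)
    {a b : ℝ} (hab : a ≤ b) (hca : c ≤ a) (hbd : b ≤ d)
    (ha : a ≤ g (g a)) (hb : g (g b) ≤ b) : ∃ t ∈ Set.Icc a b, g t = t := by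
  have hsub : Set.Icc a b ⊆ Set.Icc c d := Set.Icc_subset_Icc hca hbd
  have hc : ContinuousOn (fun x => g (g x) - x) (Set.Icc a b) :=
    ((hg.comp hg hm).mono hsub).sub continuousOn_id
  obtain ⟨t, ht, h0⟩ := intermediate_value_Icc' hab hc
    (show (0 : ℝ) ∈ Set.Icc _ _ from ⟨by simpa using hb, by simpa using ha⟩)
  refine ⟨t, ht, ?_⟩
  by_contra hne
  exact h2 ⟨t, hsub ht, g t, hm (hsub ht), fun h => hne h.symm, rfl, by
    have : g (g t) - t = 0 := h0
    linarith⟩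

lemma up_two {c d : ℝ} {g : ℝ → ℝ}
    (hg : ContinuousOn g (Set.Icc c d)) (hm : Set.MapsTo g (Set.Icc c d) (Set.Icc c d))
    (h2 : ¬ ∃ x ∈ Set.Icc c d, ∃ y ∈ Set.Icc c d, x ≠ y ∧ g x = y ∧ g y = x)
    {x : ℝ} (hx : x ∈ Set.Icc c d) (hu : x < g x) : x < g (g x) := by
  by_contra hcon
  rw [not_lt] at hcon
  have hcd : c ≤ d := hx.1.trans hx.2
  have hcx : Set.Icc c x ⊆ Set.Icc c d := Set.Icc_subset_Icc le_rfl hx.2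
  let S : Set ℝ := Set.Icc c x ∩ (fun y => g y - y) ⁻¹' {0}
  have hScl : IsCompact S := by
    have : IsClosed S := ContinuousOn.preimage_isClosed_of_isClosed
      ((hg.mono hcx).sub continuousOn_id) isClosed_Icc isClosed_singleton
    exact isCompact_Icc.of_isClosed_subset this Set.inter_subset_left
  have hSne : S.Nonempty := by
    obtain ⟨t, ht, h⟩ := exists_fixed_of_sq hg hm h2 hx.1 le_rfl hx.2
      (hm (hm ⟨le_rfl, hcd⟩)).1 hcon
    exact ⟨t, ht, by simp [h]⟩
  obtain ⟨z, ⟨hz, hz0⟩, hzmax⟩ := hScl.exists_isGreatest hSne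
  have hzf : g z = z := by
    have : g z - z = 0 := hz0
    linarith
  have hzx : z < x := by
    refine lt_of_le_of_ne hz.2 ?_
    rintro rfl
    linarith
  obtain ⟨y, hy, hyx⟩ := intermediate_value_Icc hzx.le
    (hg.mono (Set.Icc_subset_Icc hz.1 hx.2)) (show x ∈ Set.Icc (g z) (g x) from
      ⟨by linarith, hu.le⟩)
  have hzy : z < y := by
    refine lt_of_le_of_ne hy.1 ?_
    rintro rfl
    linarith
  obtain ⟨t, ht, htf⟩ := exists_fixed_of_sq hg hm h2 hy.2 (hz.1.trans hy.1) hx.2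
    (by rw [hyx]; linarith [hy.2]) hcon
  have : t ≤ z := hzmax ⟨⟨hz.1.trans (hy.1.trans ht.1), ht.2⟩, by simp [htf]⟩
  linarith [ht.1]

lemma iter_mem_s19 {c d : ℝ} {g : ℝ → ℝ} (hm : Set.MapsTo g (Set.Icc c d) (Set.Icc c d))
    {x : ℝ} (hx : x ∈ Set.Icc c d) (n : ℕ) : g^[n] x ∈ Set.Icc c d :=
  hm.iterate n hx

lemma up_all {c d : ℝ} {g : ℝ → ℝ}
    (hg : ContinuousOn g (Set.Icc c d)) (hm : Set.MapsTo g (Set.Icc c d) (Set.Icc c d))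
    (h2 : ¬ ∃ x ∈ Set.Icc c d, ∃ y ∈ Set.Icc c d, x ≠ y ∧ g x = y ∧ g y = x)
    (n : ℕ) : ∀ x ∈ Set.Icc c d, x < g x → x < g^[n + 1] x := by
  induction n using Nat.strong_induction_on with
  | _ n ih =>
  intro x hx hu
  rcases Nat.eq_zero_or_pos n with rfl | hn
  · simpa using hu
  by_contra hcon
  rw [not_lt] at hcon
  have hgt : ∀ j, j < n → x < g^[j + 1] x := fun j hj => ih j hj x hx hu
  have hdown : ∀ j, j < n → g^[j + 1 + 1] x ≤ g^[j + 1] x := by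
    intro j hj
    by_contra h
    rw [not_le, Function.iterate_succ_apply' g (j + 1)] at h
    have := ih (n - 1 - j) (by omega) _ (iter_mem_s19 hm hx (j + 1)) h
    rw [← Function.iterate_add_apply, show n - 1 - j + 1 + (j + 1) = n + 1 by omega] at this
    linarith [hgt j hj]
  have hle : ∀ j, j < n → g^[j + 1] x ≤ g x := by
    intro j
    induction j with
    | zero => intro _; simp
    | succ j ihj => intro hj; exact (hdown j (by omega)).trans (ihj (by omega))
  obtain ⟨k, rfl⟩ : ∃ k, n = k + 1 := ⟨n - 1, by omega⟩
  set w := g^[k + 1] x with hw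
  have hwm : w ∈ Set.Icc c d := iter_mem_s19 hm hx _
  have hxw : x < w := hgt k (by omega)
  have hw1 : w ≤ g x := hle k (by omega)
  have hgw : g w ≤ x := by rw [hw, ← Function.iterate_succ_apply' g]; exact hcon
  have hsub : Set.Icc x w ⊆ Set.Icc c d := Set.Icc_subset_Icc hx.1 hwm.2
  have hc : ContinuousOn (fun y => g y - y) (Set.Icc x w) := (hg.mono hsub).sub continuousOn_id
  obtain ⟨z, hz, hz0⟩ := intermediate_value_Icc' hxw.le hc
    (show (0 : ℝ) ∈ Set.Icc _ _ from ⟨by linarith, by linarith⟩)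
  have hzf : g z = z := by
    have : g z - z = 0 := hz0
    linarith
  obtain ⟨y, hy, hyw⟩ := intermediate_value_Icc' hz.1
    (hg.mono (Set.Icc_subset_Icc hx.1 (hz.2.trans hwm.2)))
    (show w ∈ Set.Icc (g z) (g x) from ⟨by linarith [hz.2], hw1⟩)
  have hzw : z < w := by
    refine lt_of_le_of_ne hz.2 ?_
    intro h
    rw [← h] at hgw
    linarith [hz.1]
  have := up_two hg hm h2 (x := y) ⟨hx.1.trans hy.1, hy.2.trans (hz.2.trans hwm.2)⟩
    (by rw [hyw]; linarith [hy.2])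
  rw [hyw] at this
  linarith [hy.1]

lemma down_all {c d : ℝ} {g : ℝ → ℝ}
    (hg : ContinuousOn g (Set.Icc c d)) (hm : Set.MapsTo g (Set.Icc c d) (Set.Icc c d))
    (h2 : ¬ ∃ x ∈ Set.Icc c d, ∃ y ∈ Set.Icc c d, x ≠ y ∧ g x = y ∧ g y = x)
    (n : ℕ) (x : ℝ) (hx : x ∈ Set.Icc c d) (hu : g x < x) : g^[n + 1] x < x := by
  have hneg : ∀ y : ℝ, y ∈ Set.Icc (-d) (-c) → -y ∈ Set.Icc c d := fun y hy =>
    ⟨by linarith [hy.2], by linarith [hy.1]⟩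
  have hneg' : ∀ y : ℝ, y ∈ Set.Icc c d → -y ∈ Set.Icc (-d) (-c) := fun y hy =>
    ⟨by linarith [hy.2], by linarith [hy.1]⟩
  let h : ℝ → ℝ := fun y => -g (-y)
  have hit : ∀ n : ℕ, ∀ y, h^[n] (-y) = -g^[n] y := by
    intro n
    induction n with
    | zero => intro y; simp
    | succ n ih => intro y; rw [Function.iterate_succ_apply', ih, Function.iterate_succ_apply']; simp [h]
  have := up_all (c := -d) (d := -c) (g := h)
    ((hg.comp continuous_neg.continuousOn (fun y hy => hneg y hy)).neg)
    (fun y hy => hneg' _ (hm (hneg y hy)))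
    (by
      rintro ⟨y, hy, z, hz, hne, h1, h3⟩
      refine h2 ⟨-y, hneg y hy, -z, hneg z hz, fun h => hne (neg_injective h), ?_, ?_⟩
      · simp only [h] at h1; linarith
      · simp only [h] at h3; linarith)
    n (-x) (hneg' x hx) (by simp only [h, neg_neg]; linarith)
  rw [hit] at this
  linarith

lemma orbit_tri {c d : ℝ} {g : ℝ → ℝ}
    (hg : ContinuousOn g (Set.Icc c d)) (hm : Set.MapsTo g (Set.Icc c d) (Set.Icc c d))
    (h2 : ¬ ∃ x ∈ Set.Icc c d, ∃ y ∈ Set.Icc c d, x ≠ y ∧ g x = y ∧ g y = x)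
    {p : ℝ} (hp : p ∈ Set.Icc c d) (m k : ℕ) :
    (g^[m] p < g^[m + 1] p → g^[m] p < g^[m + (k + 1)] p) ∧
    (g^[m + 1] p < g^[m] p → g^[m + (k + 1)] p < g^[m] p) ∧
    (g^[m + 1] p = g^[m] p → g^[m + (k + 1)] p = g^[m] p) := by
  have hx := iter_mem_s19 hm hp m
  have e : g^[m + (k + 1)] p = g^[k + 1] (g^[m] p) := by
    rw [add_comm, Function.iterate_add_apply]
  rw [e, Function.iterate_succ_apply']
  exact ⟨up_all hg hm h2 k _ hx, down_all hg hm h2 k _ hx,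
    fun h => Function.iterate_fixed h (k + 1)⟩

lemma orbit_iff {c d : ℝ} {g : ℝ → ℝ}
    (hg : ContinuousOn g (Set.Icc c d)) (hm : Set.MapsTo g (Set.Icc c d) (Set.Icc c d))
    (h2 : ¬ ∃ x ∈ Set.Icc c d, ∃ y ∈ Set.Icc c d, x ≠ y ∧ g x = y ∧ g y = x)
    {p : ℝ} (hp : p ∈ Set.Icc c d) (m k : ℕ) :
    (g^[m] p < g^[m + (k + 1)] p ↔ g^[m] p < g^[m + 1] p) ∧
    (g^[m + (k + 1)] p < g^[m] p ↔ g^[m + 1] p < g^[m] p) := by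
  obtain ⟨h1, h3, h4⟩ := orbit_tri hg hm h2 hp m k
  rcases lt_trichotomy (g^[m] p) (g^[m + 1] p) with h | h | h
  · have := h1 h
    exact ⟨iff_of_true this h, iff_of_false this.not_gt h.not_gt⟩
  · have := h4 h.symm
    rw [this, ← h]; simp
  · have := h3 h
    exact ⟨iff_of_false this.not_gt h.not_gt, iff_of_true this h⟩

noncomputable def aseq (n : ℕ) : ℝ := (Real.pi / 2 + n * (2 * Real.pi))⁻¹

lemma aseq_pos (n : ℕ) : 0 < aseq n := by
  unfold aseq; have := Real.pi_pos; positivity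

lemma aseq_lt (n : ℕ) : aseq (n + 1) < aseq n := by
  unfold aseq
  have := Real.pi_pos
  apply inv_strictAnti₀ (by positivity)
  push_cast
  nlinarith

lemma aseq_zero : aseq 0 ≤ 1 := by
  unfold aseq
  have := Real.pi_gt_three
  apply inv_le_one_of_one_le₀
  simp; linarith

section
variable {f : ℝ → ℝ}

lemma f_abs (hf0 : f 0 = 0) (hfx : ∀ x : ℝ, x ≠ 0 → f x = x * Real.sin (1 / x)) (x : ℝ) :
    |f x| ≤ |x| := by
  by_cases h : x = 0
  · simp [h, hf0]
  · rw [hfx x h, abs_mul]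
    exact mul_le_of_le_one_right (abs_nonneg x) (Real.abs_sin_le_one _)

lemma f_even (hfx : ∀ x : ℝ, x ≠ 0 → f x = x * Real.sin (1 / x)) (x : ℝ) :
    f (-x) = f x := by
  by_cases h : x = 0
  · simp [h]
  · rw [hfx x h, hfx (-x) (neg_ne_zero.2 h), one_div, one_div, inv_neg, Real.sin_neg]; ring

lemma f_cont (hf0 : f 0 = 0) (hfx : ∀ x : ℝ, x ≠ 0 → f x = x * Real.sin (1 / x)) :
    Continuous f := by
  rw [continuous_iff_continuousAt]
  intro x
  by_cases h : x = 0
  · subst h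
    unfold ContinuousAt
    rw [hf0]
    apply squeeze_zero_norm (a := fun x => |x|) (fun x => f_abs hf0 hfx x)
    simpa using (continuous_abs.tendsto (0 : ℝ))
  · have h1 : ContinuousAt (fun x : ℝ => x * Real.sin (1 / x)) x := by
      apply continuousAt_id.mul
      apply Real.continuous_sin.continuousAt.comp
      exact continuousAt_const.div continuousAt_id h
    refine h1.congr ?_
    filter_upwards [isOpen_ne.mem_nhds h] with y hy
    exact (hfx y hy).symm

lemma f_no_two (hf0 : f 0 = 0) (hfx : ∀ x : ℝ, x ≠ 0 → f x = x * Real.sin (1 / x))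
    {x y : ℝ} (hne : x ≠ y) (h1 : f x = y) (h2 : f y = x) : False := by
  have a1 := f_abs hf0 hfx x
  have a2 := f_abs hf0 hfx y
  rw [h1] at a1
  rw [h2] at a2
  rcases abs_eq_abs.1 (le_antisymm a1 a2) with h | h
  · exact hne h.symm
  · rw [h, f_even hfx, h1] at h2
    exact hne h2.symm

lemma f_cover (hf0 : f 0 = 0) (hfx : ∀ x : ℝ, x ≠ 0 → f x = x * Real.sin (1 / x))
    (n : ℕ) (v : ℝ) (hv : |v| ≤ aseq (n + 1)) :
    ∃ x ∈ Set.Icc (aseq (n + 1)) (aseq n), f x = v := by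
  have hpi := Real.pi_pos
  let c : ℝ := (3 * Real.pi / 2 + n * (2 * Real.pi))⁻¹
  have hc0 : 0 < c := by positivity
  have hc1 : aseq (n + 1) ≤ c := by
    unfold aseq
    apply inv_anti₀ (by positivity)
    push_cast
    nlinarith
  have hc2 : c ≤ aseq n := by
    unfold aseq
    apply inv_anti₀ (by positivity)
    linarith
  have hfa : f (aseq (n + 1)) = aseq (n + 1) := by
    rw [hfx _ (aseq_pos _).ne']
    have : Real.sin (1 / aseq (n + 1)) = 1 := by
      unfold aseq
      rw [one_div, inv_inv, Real.sin_add_nat_mul_two_pi, Real.sin_pi_div_two]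
    rw [this, mul_one]
  have hfc : f c = -c := by
    rw [hfx _ hc0.ne']
    have : Real.sin (1 / c) = -1 := by
      simp only [c]
      rw [one_div, inv_inv, Real.sin_add_nat_mul_two_pi,
        show 3 * Real.pi / 2 = Real.pi / 2 + Real.pi by ring, Real.sin_add_pi, Real.sin_pi_div_two]
    rw [this]; ring
  have hv' := abs_le.1 hv
  obtain ⟨x, hx, h⟩ := intermediate_value_Icc' hc1 (f_cont hf0 hfx).continuousOn
    (show v ∈ Set.Icc (f c) (f (aseq (n + 1))) from
      ⟨by rw [hfc]; linarith [hv'.1], by rw [hfa]; exact hv'.2⟩)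
  exact ⟨x, ⟨hx.1, hx.2.trans hc2⟩, h⟩

open Classical in
/-- The target interval at stage `n` for the real sequence `u`. -/
noncomputable def stageSet (u : ℕ → ℝ) (n : ℕ) : Set ℝ :=
  if u n < u (n + 1) then Set.Icc (-aseq n) (-aseq (n + 1))
  else if u (n + 1) < u n then Set.Icc (aseq (n + 1)) (aseq n) else {0}

lemma stage_abs (u : ℕ → ℝ) (n : ℕ) {v : ℝ} (hv : v ∈ stageSet u n) : |v| ≤ aseq n := by
  have h0 := aseq_pos n
  have h1 := aseq_pos (n + 1)
  unfold stageSet at hv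
  rw [abs_le]
  split_ifs at hv
  · exact ⟨hv.1, by linarith [hv.2]⟩
  · exact ⟨by linarith [hv.1], hv.2⟩
  · rw [Set.mem_singleton_iff.1 hv]; exact ⟨by linarith, h0.le⟩

lemma stage_compact (u : ℕ → ℝ) (n : ℕ) : IsCompact (stageSet u n) := by
  unfold stageSet
  split_ifs
  · exact isCompact_Icc
  · exact isCompact_Icc
  · exact isCompact_singleton

lemma stage_nonempty (u : ℕ → ℝ) (n : ℕ) : (stageSet u n).Nonempty := by
  have := aseq_lt n
  unfold stageSet
  split_ifs
  · exact Set.nonempty_Icc.2 (by linarith)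
  · exact Set.nonempty_Icc.2 (by linarith)
  · exact Set.singleton_nonempty _

lemma stage_cover (hf0 : f 0 = 0) (hfx : ∀ x : ℝ, x ≠ 0 → f x = x * Real.sin (1 / x))
    (u : ℕ → ℝ) (hu : ∀ n, u (n + 1) = u n → u (n + 1 + 1) = u (n + 1)) (n : ℕ) (v : ℝ)
    (hv : v ∈ stageSet u (n + 1)) : ∃ x ∈ stageSet u n, f x = v := by
  obtain ⟨x, hx, hxv⟩ := f_cover hf0 hfx n v (stage_abs u (n + 1) hv)
  by_cases h1 : u n < u (n + 1)
  · refine ⟨-x, ?_, by rw [f_even hfx, hxv]⟩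
    unfold stageSet
    rw [if_pos h1]
    exact ⟨by linarith [hx.2], by linarith [hx.1]⟩
  · by_cases h2 : u (n + 1) < u n
    · refine ⟨x, ?_, hxv⟩
      unfold stageSet
      rw [if_neg h1, if_pos h2]
      exact hx
    · have he := hu n (le_antisymm (not_lt.1 h1) (not_lt.1 h2))
      refine ⟨0, ?_, ?_⟩
      · unfold stageSet
        rw [if_neg h1, if_neg h2]
        exact rfl
      · unfold stageSet at hv
        rw [if_neg (by rw [he]; exact lt_irrefl _), if_neg (by rw [he]; exact lt_irrefl _)] at hv
        rw [hf0, Set.mem_singleton_iff.1 hv]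

lemma exists_orbit (hf0 : f 0 = 0) (hfx : ∀ x : ℝ, x ≠ 0 → f x = x * Real.sin (1 / x))
    (u : ℕ → ℝ) (hu : ∀ n, u (n + 1) = u n → u (n + 1 + 1) = u (n + 1)) :
    ∃ q, ∀ n, f^[n] q ∈ stageSet u n := by
  have hc := f_cont hf0 hfx
  have key : ∀ n, ∀ v ∈ stageSet u n, ∃ q, (∀ m ≤ n, f^[m] q ∈ stageSet u m) ∧ f^[n] q = v := by
    intro n
    induction n with
    | zero =>
      intro v hv
      refine ⟨v, fun m hm => ?_, rfl⟩
      obtain rfl : m = 0 := by omega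
      exact hv
    | succ n ih =>
      intro v hv
      obtain ⟨x, hx, hxv⟩ := stage_cover hf0 hfx u hu n v hv
      obtain ⟨q, hq, hqx⟩ := ih x hx
      have e : f^[n + 1] q = v := by rw [Function.iterate_succ_apply', hqx, hxv]
      refine ⟨q, fun m hm => ?_, e⟩
      rcases Nat.lt_or_ge n m with h | h
      · obtain rfl : m = n + 1 := by omega
        rw [e]; exact hv
      · exact hq m h
  let K : ℕ → Set ℝ := fun n => ⋂ m ∈ Set.Iic n, f^[m] ⁻¹' stageSet u m
  have hKcl : ∀ n, IsClosed (K n) := fun n =>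
    isClosed_biInter fun m _ => (stage_compact u m).isClosed.preimage (hc.iterate m)
  have hK0 : IsCompact (K 0) := by
    have : K 0 ⊆ stageSet u 0 := by
      intro q hq
      have := Set.mem_iInter₂.1 hq 0 (by simp)
      simpa using this
    exact (stage_compact u 0).of_isClosed_subset (hKcl 0) this
  obtain ⟨q, hq⟩ := IsCompact.nonempty_iInter_of_sequence_nonempty_isCompact_isClosed K
    (fun n q hq => by
      refine Set.mem_iInter₂.2 fun m hm => Set.mem_iInter₂.1 hq m ?_
      simp only [Set.mem_Iic] at hm ⊢
      omega)
    (fun n => by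
      obtain ⟨v, hv⟩ := stage_nonempty u n
      obtain ⟨q, hq, _⟩ := key n v hv
      exact ⟨q, Set.mem_iInter₂.2 fun m hm => hq m hm⟩) hK0 hKcl
  exact ⟨q, fun n => Set.mem_iInter₂.1 (Set.mem_iInter.1 hq n) n (by simp)⟩

lemma orbit_steps (hf0 : f 0 = 0) (hfx : ∀ x : ℝ, x ≠ 0 → f x = x * Real.sin (1 / x))
    (u : ℕ → ℝ) {q : ℝ} (hq : ∀ n, f^[n] q ∈ stageSet u n) (n : ℕ) :
    (u n < u (n + 1) ↔ f^[n] q < f^[n + 1] q) ∧ (u (n + 1) < u n ↔ f^[n + 1] q < f^[n] q) := by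
  have hn := hq n
  have hne : aseq (n + 1) ≤ |f^[n] q| → f^[n + 1] q ≠ f^[n] q := by
    intro hle he
    have he' : f^[n + 2] q = f^[n] q := by
      rw [Function.iterate_succ_apply'] at he
      rw [Function.iterate_succ_apply', Function.iterate_succ_apply', he, he]
    have := stage_abs u _ (hq (n + 2))
    rw [he'] at this
    linarith [aseq_lt (n + 1)]
  have hab : |f^[n + 1] q| ≤ |f^[n] q| := by
    rw [Function.iterate_succ_apply']; exact f_abs hf0 hfx _
  have ha := aseq_pos (n + 1)
  unfold stageSet at hn
  split_ifs at hn with h1 h2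
  · have hneg : f^[n] q < 0 := by linarith [hn.2]
    rw [abs_of_neg hneg] at hne hab
    have := lt_of_le_of_ne (by linarith [(abs_le.1 hab).1] : f^[n] q ≤ f^[n + 1] q)
      (hne (by linarith [hn.2])).symm
    exact ⟨iff_of_true h1 this, iff_of_false h1.not_gt this.not_gt⟩
  · have hpos : 0 < f^[n] q := by linarith [hn.1]
    rw [abs_of_pos hpos] at hne hab
    have := lt_of_le_of_ne (abs_le.1 hab).2 (hne hn.1)
    exact ⟨iff_of_false h2.not_gt this.not_gt, iff_of_true h2 this⟩
  · have h0 : f^[n] q = 0 := hn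
    have h3 : f^[n + 1] q = 0 := by rw [Function.iterate_succ_apply', h0, hf0]
    rw [h0, h3]
    simp [not_lt.1 h1, not_lt.1 h2]

end

/-- The map f(x) = x sin(1/x) is a continuous self-map of [-1,1] with no 2-cycle
which is universal for the first Sharkovsky class. -/
theorem stmt_19 (f : ℝ → ℝ) (hf0 : f 0 = 0)
    (hfx : ∀ x : ℝ, x ≠ 0 → f x = x * Real.sin (1 / x)) :
    Set.MapsTo f (Set.Icc (-1 : ℝ) 1) (Set.Icc (-1 : ℝ) 1) ∧
    ContinuousOn f (Set.Icc (-1 : ℝ) 1) ∧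
    (¬ ∃ x ∈ Set.Icc (-1 : ℝ) 1, ∃ y ∈ Set.Icc (-1 : ℝ) 1,
      x ≠ y ∧ f x = y ∧ f y = x) ∧
    IsUniversalF1 (-1) 1 f := by
  have hmaps : Set.MapsTo f (Set.Icc (-1 : ℝ) 1) (Set.Icc (-1 : ℝ) 1) := fun x hx =>
    abs_le.1 ((f_abs hf0 hfx x).trans (abs_le.2 hx))
  have hcont : ContinuousOn f (Set.Icc (-1 : ℝ) 1) := (f_cont hf0 hfx).continuousOn
  have htwo : ¬ ∃ x ∈ Set.Icc (-1 : ℝ) 1, ∃ y ∈ Set.Icc (-1 : ℝ) 1,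
      x ≠ y ∧ f x = y ∧ f y = x := by
    rintro ⟨x, _, y, _, hne, h1, h2⟩
    exact f_no_two hf0 hfx hne h1 h2
  refine ⟨hmaps, hcont, htwo, ?_⟩
  intro c d _ g hg hm h2 p hp
  obtain ⟨q, hq⟩ := exists_orbit hf0 hfx (fun n => g^[n] p) (by
    intro n h
    simp only [Function.iterate_succ_apply'] at h ⊢
    rw [h, h])
  have hqm : q ∈ Set.Icc (-1 : ℝ) 1 :=
    abs_le.1 ((stage_abs _ 0 (hq 0)).trans aseq_zero)
  refine ⟨q, hqm, fun m n => ?_⟩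
  rcases lt_trichotomy m n with h | rfl | h
  · obtain ⟨k, rfl⟩ : ∃ k, n = m + (k + 1) := ⟨n - m - 1, by omega⟩
    rw [(orbit_iff hg hm h2 hp m k).1, (orbit_iff hcont hmaps htwo hqm m k).1]
    exact (orbit_steps hf0 hfx _ hq m).1
  · simp
  · obtain ⟨k, rfl⟩ : ∃ k, m = n + (k + 1) := ⟨m - n - 1, by omega⟩
    rw [(orbit_iff hg hm h2 hp n k).2, (orbit_iff hcont hmaps htwo hqm n k).2]
    exact (orbit_steps hf0 hfx _ hq n).2
end
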